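/- arXiv:1905.04131 — 5 statements merged into one kernel-verified Lean document; each statement's English description precedes it below -/
import Mathlib

section
/- Let 0 ≤ ν ≤ 1 and define, with either choice of sign, τ(x) = 1 ± (1/x)(1 - cosh((1-ν)x)/cosh(x)) for x > 0. Then the Laplace transform L(τ) is a generalized Stieltjes function of order 2 (hence τ is infinitely divisible), and for x > 0: L(τ)(x) = 1/x ± log( 4 Γ((x-ν)/4 + 1) Γ((x+ν)/4 + 1/2) / ( x Γ((x-ν)/4 + 1/2) Γ((x+ν)/4) ) ). -/
open MeasureTheory Filter Set

/-- The Laplace transform of `g`. -/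
noncomputable def LaplaceTransform (g : ℝ → ℝ) (x : ℝ) : ℝ :=
  ∫ t in Set.Ioi (0:ℝ), Real.exp (-x * t) * g t

/-- `f` is completely monotonic on `(0,∞)`. -/
def CompletelyMonotonic (f : ℝ → ℝ) : Prop :=
  (∀ x : ℝ, 0 < x → ContDiffAt ℝ (⊤ : ℕ∞) f x) ∧
  ∀ (n : ℕ) (x : ℝ), 0 < x → 0 ≤ (-1 : ℝ) ^ n * iteratedDeriv n f x

/-- `f` is logarithmically completely monotonic on `(0,∞)`. -/
def LogCompletelyMonotonic (f : ℝ → ℝ) : Prop :=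
  (∀ x : ℝ, 0 < x → 0 < f x) ∧ (∀ x : ℝ, 0 < x → ContDiffAt ℝ (⊤ : ℕ∞) f x) ∧
  CompletelyMonotonic (fun x => -deriv f x / f x)

/-- `f` is a generalized Stieltjes function of order `lam` on `(0,∞)`. -/
def IsGenStieltjes (lam : ℝ) (f : ℝ → ℝ) : Prop :=
  ∃ (μ : Measure ℝ) (c : ℝ), 0 ≤ c ∧ μ (Set.Iio 0) = 0 ∧
    ∀ x : ℝ, 0 < x →
      Integrable (fun t => (x + t) ^ (-lam)) μ ∧
      f x = (∫ t, (x + t) ^ (-lam) ∂μ) + c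

/-- Nielsen's beta function. -/
noncomputable def nielsenBeta (x : ℝ) : ℝ :=
  ∫ t in Set.Ioi (0:ℝ), Real.exp (-x * t) / (1 + Real.exp (-t))

lemma mono_aux {f f' : ℝ → ℝ} {a b : ℝ} (hab : a ≤ b) (h : ∀ t, HasDerivAt f (f' t) t)
    (h' : ∀ t, a ≤ t → t ≤ b → 0 ≤ f' t) : f a ≤ f b := by
  have : MonotoneOn f (Icc a b) := by
    apply monotoneOn_of_deriv_nonneg (convex_Icc a b)
    · intro t ht; exact (h t).continuousAt.continuousWithinAt
    · intro t ht
      exact (h t).differentiableAt.differentiableWithinAt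
    · intro t ht
      rw [interior_Icc] at ht
      rw [(h t).deriv]; exact h' t ht.1.le ht.2.le
  exact this (left_mem_Icc.2 hab) (right_mem_Icc.2 hab) hab

lemma sinh_bound {t : ℝ} (ht : 0 ≤ t) : Real.sinh t ≤ t * Real.cosh t := by
  have := mono_aux (f := fun t => t * Real.cosh t - Real.sinh t) (f' := fun t => t * Real.sinh t) ht
    (fun t => by
      have := ((hasDerivAt_id t).mul (Real.hasDerivAt_cosh t)).sub (Real.hasDerivAt_sinh t)
      refine this.congr_deriv ?_; simp) (fun t ht _ => mul_nonneg ht (Real.sinh_nonneg_iff.2 ht))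
  simp only [Real.sinh_zero] at this; linarith

lemma self_le_sinh {t : ℝ} (ht : 0 ≤ t) : t ≤ Real.sinh t := by
  have := mono_aux (f := fun t => Real.sinh t - t) (f' := fun t => Real.cosh t - 1) ht
    (fun t => (Real.hasDerivAt_sinh t).sub (hasDerivAt_id t))
    (fun t ht _ => sub_nonneg.2 (Real.one_le_cosh t))
  simp only [Real.sinh_zero] at this; linarith

lemma sinh_ratio {x y : ℝ} (hx : 0 ≤ x) (hxy : x ≤ y) : y * Real.sinh x ≤ x * Real.sinh y := by
  have := mono_aux (f := fun y => x * Real.sinh y - y * Real.sinh x)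
    (f' := fun y => x * Real.cosh y - Real.sinh x) hxy
    (fun t => by
      have := ((Real.hasDerivAt_sinh t).const_mul x).sub ((hasDerivAt_id t).mul_const (Real.sinh x))
      refine this.congr_deriv ?_; simp)
    (fun t ht _ => by
      have h1 := sinh_bound hx
      have h2 : Real.cosh x ≤ Real.cosh t := Real.cosh_le_cosh.2 (by
        rw [abs_of_nonneg hx, abs_of_nonneg (hx.trans ht)]; exact ht)
      nlinarith)
  linarith

lemma tanh_ratio {v t : ℝ} (hv : 0 ≤ v) (hvt : v ≤ t) :
    v * (Real.sinh t * Real.cosh v) ≤ t * (Real.sinh v * Real.cosh t) := by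
  have := sinh_ratio (x := t - v) (y := t + v) (by linarith) (by linarith)
  rw [Real.sinh_sub, Real.sinh_add] at this
  nlinarith

lemma cosh_quad {t B : ℝ} (ht : 0 ≤ t) (ht2 : t ≤ B) :
    (Real.cosh t - 1) * B^2 ≤ (Real.cosh B - 1) * t^2 := by
  have h (r : ℝ) := (hasSum_nat_add_iff' 1).2 (Real.hasSum_cosh r)
  have h1 := (h t).mul_right (B^2)
  have h2 := (h B).mul_right (t^2)
  simp only [Finset.range_one, Finset.sum_singleton, mul_zero, pow_zero, Nat.factorial_zero, Nat.cast_one, div_one] at h1 h2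
  refine hasSum_le (fun n => ?_) h1 h2
  have : t ^ (2*n) ≤ B^(2*n) := by gcongr
  have e1 : t ^ (2 * (n+1)) = t^(2*n) * t^2 := by ring
  have e2 : B ^ (2 * (n+1)) = B^(2*n) * B^2 := by ring
  rw [e1, e2, div_mul_eq_mul_div, div_mul_eq_mul_div]
  apply div_le_div_of_nonneg_right _ (by positivity)
  calc _ = t^(2*n) * (t^2*B^2) := by ring
    _ ≤ B^(2*n) * (t^2*B^2) := by gcongr
    _ = _ := by ring

lemma exp_q1 : Real.exp 1.45 ≤ 4.2632 ∧ 4.2625 ≤ Real.exp 1.45 := by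
  constructor
  · have := Real.exp_bound' (x := 0.725) (by norm_num) (by norm_num) (n := 8) (by norm_num)
    have e : Real.exp 1.45 = Real.exp 0.725 ^ 2 := by rw [← Real.exp_nat_mul]; norm_num
    rw [e]
    have h2 : Real.exp 0.725 ≤ 2.064735 := this.trans (by norm_num [Finset.sum_range_succ, Nat.factorial])
    have := Real.exp_pos 0.725
    nlinarith
  · exact le_trans (by norm_num [Finset.sum_range_succ, Nat.factorial]) (Real.sum_le_exp_of_nonneg (x := 1.45) (by norm_num) 10)

lemma exp_q2 : Real.exp 1.5907 ≤ 4.9076 := by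
  have := Real.exp_bound' (x := 0.79535) (by norm_num) (by norm_num) (n := 8) (by norm_num)
  have e : Real.exp 1.5907 = Real.exp 0.79535 ^ 2 := by rw [← Real.exp_nat_mul]; norm_num
  rw [e]
  have h2 : Real.exp 0.79535 ≤ 2.215295 := this.trans (by norm_num [Finset.sum_range_succ, Nat.factorial])
  have := Real.exp_pos 0.79535
  nlinarith

lemma exp_q3 : Real.exp 3.386 ≤ 29.6 := by
  have := Real.exp_bound' (x := 0.8465) (by norm_num) (by norm_num) (n := 8) (by norm_num)
  have e : Real.exp 3.386 = (Real.exp 0.8465 ^ 2)^2 := by rw [← Real.exp_nat_mul, ← Real.exp_nat_mul]; norm_num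
  rw [e]
  have h2 : Real.exp 0.8465 ≤ 2.3317 := this.trans (by norm_num [Finset.sum_range_succ, Nat.factorial])
  calc _ ≤ ((2.3317:ℝ)^2)^2 := by gcongr
    _ ≤ _ := by norm_num

lemma exp_q4 : Real.exp 2.5 ≤ 12.2 ∧ 12 ≤ Real.exp 2.5 := by
  constructor
  · have := Real.exp_bound' (x := 0.625) (by norm_num) (by norm_num) (n := 8) (by norm_num)
    have e : Real.exp 2.5 = (Real.exp 0.625 ^ 2)^2 := by rw [← Real.exp_nat_mul, ← Real.exp_nat_mul]; norm_num
    rw [e]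
    have h2 : Real.exp 0.625 ≤ 1.86825 := this.trans (by norm_num [Finset.sum_range_succ, Nat.factorial])
    calc _ ≤ ((1.86825:ℝ)^2)^2 := by gcongr
      _ ≤ _ := by norm_num
  · exact le_trans (by norm_num [Finset.sum_range_succ, Nat.factorial]) (Real.sum_le_exp_of_nonneg (x := 2.5) (by norm_num) 10)

lemma cosh_q1 {t : ℝ} (ht : 0 ≤ t) (ht2 : t ≤ 1.45) : Real.cosh t ≤ 1 + 0.5945 * t^2 := by
  have h := cosh_quad ht ht2
  have hc : Real.cosh 1.45 ≤ 2.2493 := by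
    rw [Real.cosh_eq, Real.exp_neg]
    obtain ⟨h1, h2⟩ := exp_q1
    have : (Real.exp 1.45)⁻¹ ≤ (4.2625:ℝ)⁻¹ := by gcongr
    have : (4.2625:ℝ)⁻¹ ≤ 0.23465 := by norm_num
    linarith
  nlinarith [sq_nonneg t]

lemma phi_bound {t : ℝ} (ht : 0 ≤ t) : (1 - 0.386 * t) * Real.cosh t ≤ 1 := by
  by_cases hneg : 1 - 0.386 * t ≤ 0
  · nlinarith [Real.cosh_pos t]
  push Not at hneg
  by_cases h : t ≤ 1.45
  · have := cosh_q1 ht h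
    have h2 : (1 - 0.386 * t) * Real.cosh t ≤ (1 - 0.386*t) * (1 + 0.5945 * t^2) := by gcongr
    have h3 : 0 ≤ t * (0.386 - 0.5945 * t + 0.386 * 0.5945 * t^2) := by
      apply mul_nonneg ht
      nlinarith [sq_nonneg (t - 1.2953)]
    nlinarith
  · push Not at h
    have h1 : Real.exp t * (1 - 0.386 * t) ≤ 0.386 * 4.9076 := by
      have : 1.5907 - t + 1 ≤ Real.exp (1.5907 - t) := Real.add_one_le_exp _
      have h3 : Real.exp t * Real.exp (1.5907 - t) = Real.exp 1.5907 := by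
        rw [← Real.exp_add]; ring_nf
      have h4 : Real.exp t * (1 - 0.386 * t) ≤ Real.exp t * (0.386 * Real.exp (1.5907 - t)) := by
        gcongr; nlinarith
      nlinarith [exp_q2]
    have h2 : Real.exp (-t) * (1 - 0.386 * t) ≤ 0.23465 * 0.4403 := by
      have : Real.exp (-t) ≤ 0.23465 := by
        have : Real.exp (-t) ≤ Real.exp (-1.45) := Real.exp_le_exp.2 (by linarith)
        rw [Real.exp_neg 1.45] at this
        have h5 : (Real.exp 1.45)⁻¹ ≤ (4.2625:ℝ)⁻¹ := by gcongr; exact exp_q1.2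
        have : (4.2625:ℝ)⁻¹ ≤ 0.23465 := by norm_num
        linarith
      gcongr
      linarith
    rw [Real.cosh_eq]
    nlinarith

lemma low_bound {t : ℝ} (ht : 0 ≤ t) :
    (1 - 0.228 * t) * Real.cosh t ^ 2 ≤ Real.cosh t + t * Real.sinh t := by
  have hc := Real.cosh_pos t
  have hs := Real.sinh_nonneg_iff.2 ht
  by_cases hneg : 1 - 0.228 * t ≤ 0
  · nlinarith [mul_nonneg ht hs]
  push Not at hneg
  by_cases h : t ≤ 0.38
  · have := cosh_q1 ht (by linarith)
    have h2 : (1 - 0.228 * t) * Real.cosh t ≤ (1 - 0.228*t) * (1 + 0.5945 * t^2) := by gcongr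
    have h3 : 0 ≤ t * (0.228 - 0.5945 * t + 0.228 * 0.5945 * t^2) := by
      apply mul_nonneg ht
      nlinarith [sq_nonneg t]
    have h4 : (1 - 0.228 * t) * Real.cosh t ≤ 1 := by nlinarith
    nlinarith [mul_nonneg ht hs]
  push Not at h
  by_cases h2 : t ≤ 2.5
  · have h1 := phi_bound ht
    have hs1 := self_le_sinh ht
    have hs2 : Real.sinh t ≤ 6.1 := by
      have : Real.sinh t ≤ Real.sinh 2.5 := Real.sinh_le_sinh.2 h2
      rw [Real.sinh_eq 2.5] at this
      linarith [exp_q4.1, Real.exp_pos (-2.5)]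
    have h5 : 0.158 * Real.cosh t ^2 ≤ Real.sinh t := by
      rw [Real.cosh_sq]
      nlinarith
    nlinarith
  · push Not at h2
    have h1 : Real.exp t * (1 - 0.228 * t) ≤ 0.228 * 29.6 := by
      have : 3.386 - t + 1 ≤ Real.exp (3.386 - t) := Real.add_one_le_exp _
      have h3 : Real.exp t * Real.exp (3.386 - t) = Real.exp 3.386 := by
        rw [← Real.exp_add]; ring_nf
      have h4 : Real.exp t * (1 - 0.228 * t) ≤ Real.exp t * (0.228 * Real.exp (3.386 - t)) := by
        gcongr; nlinarith
      nlinarith [exp_q3]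
    have hE : 12 ≤ Real.exp t := exp_q4.2.trans (Real.exp_le_exp.2 h2.le)
    have hE' : Real.exp t * Real.exp (-t) = 1 := by rw [← Real.exp_add]; simp
    have hEp := Real.exp_pos (-t)
    have hE2 : Real.exp (-t) ≤ 1/12 := by nlinarith
    have h6 : Real.exp (-t) * (1 - 0.228 * t) ≤ 1/12 * 0.43 := by
      gcongr; linarith
    have hch : (1 - 0.228*t) * Real.cosh t ≤ 3.4 := by
      rw [Real.cosh_eq]; nlinarith
    have hsc : 0.98 * Real.cosh t ≤ Real.sinh t := by
      rw [Real.cosh_eq, Real.sinh_eq]; nlinarith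
    nlinarith [mul_le_mul_of_nonneg_left hsc ht]

lemma up_bound (t : ℝ) : t / 2 ≤ 0.228 * Real.cosh t ^ 2 := by
  have h : 1 + t^2 + t^4/3 ≤ Real.cosh t ^ 2 := by
    have h1 : Real.cosh t ^ 2 = (1 + Real.cosh (2*t))/2 := by
      rw [Real.cosh_two_mul, Real.sinh_sq]; ring
    have h2 := sum_le_hasSum (Finset.range 3) (fun n _ => by rw [pow_mul]; positivity) (Real.hasSum_cosh (2*t))
    norm_num [Finset.sum_range_succ, Nat.factorial] at h2
    rw [h1]
    nlinarith
  nlinarith [sq_nonneg (t^2 - 0.6), sq_nonneg (t-0.775)]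

noncomputable def ww (a t : ℝ) : ℝ := 1 - Real.cosh (a * t) / Real.cosh t
noncomputable def ww' (a t : ℝ) : ℝ :=
  (Real.cosh (a * t) * Real.sinh t - a * Real.sinh (a * t) * Real.cosh t) / Real.cosh t ^ 2
noncomputable def ppf (a t : ℝ) : ℝ := (1 / t) * ww a t
noncomputable def qq (a t : ℝ) : ℝ := (t * ww' a t - ww a t) / t ^ 2

lemma hasDerivAt_cosh_mul (a t : ℝ) : HasDerivAt (fun t => Real.cosh (a * t)) (a * Real.sinh (a*t)) t := by
  have := ((hasDerivAt_id t).const_mul a).cosh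
  refine this.congr_deriv ?_; simp; ring

lemma hasDerivAt_sinh_mul (a t : ℝ) : HasDerivAt (fun t => Real.sinh (a * t)) (a * Real.cosh (a*t)) t := by
  have := ((hasDerivAt_id t).const_mul a).sinh
  refine this.congr_deriv ?_; simp; ring

lemma hasDerivAt_ww (a t : ℝ) : HasDerivAt (ww a) (ww' a t) t := by
  have hc := (Real.cosh_pos t).ne'
  have := ((hasDerivAt_cosh_mul a t).div (Real.hasDerivAt_cosh t) hc).const_sub 1
  refine this.congr_deriv ?_
  unfold ww'; field_simp; ring

/-- the auxiliary function in `u` -/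
noncomputable def GG (t u : ℝ) : ℝ :=
  Real.cosh u * (Real.cosh t + t * Real.sinh t) - u * Real.sinh u * Real.cosh t

lemma hasDerivAt_GG (t u : ℝ) : HasDerivAt (GG t)
    (t * (Real.sinh t * Real.sinh u) - u * (Real.cosh u * Real.cosh t)) u := by
  have := ((Real.hasDerivAt_cosh u).mul_const (Real.cosh t + t * Real.sinh t)).sub
    (((hasDerivAt_id u).mul (Real.hasDerivAt_sinh u)).mul_const (Real.cosh t))
  refine this.congr_deriv ?_
  simp; ring

lemma GG_self (t : ℝ) : GG t t = Real.cosh t ^ 2 := by unfold GG; ring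

lemma usinh {u : ℝ} (hu : 0 ≤ u) :
    0 ≤ u * Real.sinh u - Real.cosh u + 1 := by
  have := mono_aux (f := fun t => t * Real.sinh t - Real.cosh t) (f' := fun t => t * Real.cosh t) hu
    (fun t => by
      have := ((hasDerivAt_id t).mul (Real.hasDerivAt_sinh t)).sub (Real.hasDerivAt_cosh t)
      refine this.congr_deriv ?_; simp) (fun t ht _ => mul_nonneg ht (Real.cosh_pos t).le)
  simp only [Real.cosh_zero] at this
  linarith

lemma usinh2 {t : ℝ} (ht : 0 ≤ t) :
    t * Real.sinh t - Real.cosh t + 1 ≤ t^2/2 * Real.cosh t := by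
  have := mono_aux (f := fun v => v^2/2 * Real.cosh t - (v * Real.sinh v - Real.cosh v))
    (f' := fun v => v * Real.cosh t - v * Real.cosh v) ht
    (fun v => by
      have := (((hasDerivAt_pow 2 v).div_const 2).mul_const (Real.cosh t)).sub
        (((hasDerivAt_id v).mul (Real.hasDerivAt_sinh v)).sub (Real.hasDerivAt_cosh v))
      refine this.congr_deriv ?_; simp) (fun v hv hvt => by
        have : Real.cosh v ≤ Real.cosh t := Real.cosh_le_cosh.2 (by
          rw [abs_of_nonneg hv, abs_of_nonneg ht]; exact hvt)
        nlinarith)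
  simp only [Real.cosh_zero] at this
  linarith

lemma GG_upper {t u : ℝ} (hu : 0 ≤ u) (hut : u ≤ t) : GG t u ≤ (1 + 0.228 * t) * Real.cosh t ^ 2 := by
  have ht := hu.trans hut
  have hc := Real.cosh_pos t
  have := mono_aux (f := fun v => GG t v * Real.cosh t + (v * Real.sinh v - Real.cosh v))
    (f' := fun v => (t * (Real.sinh t * Real.sinh v) - v * (Real.cosh v * Real.cosh t)) * Real.cosh t
        + v * Real.cosh v) hut
    (fun v => by
      have := ((hasDerivAt_GG t v).mul_const (Real.cosh t)).add
        (((hasDerivAt_id v).mul (Real.hasDerivAt_sinh v)).sub (Real.hasDerivAt_cosh v))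
      refine this.congr_deriv ?_; simp) (fun v hv hvt => by
        have h1 := tanh_ratio (hu.trans hv) hvt
        have h2 := Real.sinh_nonneg_iff.2 ht
        have h3 := mul_le_mul_of_nonneg_left h1 h2
        have h4 := Real.cosh_sq t
        have : v * Real.cosh v * Real.cosh t ^2 = v * Real.cosh v * (Real.sinh t ^ 2 + 1) := by rw [h4]
        nlinarith)
  rw [GG_self] at this
  have h1 := usinh hu
  have h2 := usinh2 ht
  have h3 := up_bound t
  have h4 : GG t u * Real.cosh t ≤ ((1 + 0.228 * t) * Real.cosh t ^ 2) * Real.cosh t := by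
    have : t^2/2 * Real.cosh t ≤ t * (0.228 * Real.cosh t ^ 2) * Real.cosh t := by
      apply mul_le_mul_of_nonneg_right _ hc.le
      nlinarith
    nlinarith
  exact le_of_mul_le_mul_right h4 hc

lemma GG_lower {t u : ℝ} (hu : 0 ≤ u) (hut : u ≤ t) : (1 - 0.228 * t) * Real.cosh t ^ 2 ≤ GG t u := by
  have ht := hu.trans hut
  have hc := Real.cosh_pos t
  rcases hu.eq_or_lt with rfl | hu0
  · simpa [GG] using low_bound ht
  by_cases h : u * (Real.cosh u * Real.cosh t) ≤ t * (Real.sinh t * Real.sinh u)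
  · have := mono_aux (f := GG t) hu (fun v => hasDerivAt_GG t v) (fun v hv hvu => by
      have h1 := tanh_ratio hv hvu
      have h2 := mul_le_mul_of_nonneg_left h hv
      have h3 := mul_le_mul_of_nonneg_left h1 (mul_nonneg ht (Real.sinh_nonneg_iff.2 ht))
      have h4 : 0 ≤ u * Real.cosh u * (t * (Real.sinh t * Real.sinh v) - v * (Real.cosh v * Real.cosh t)) := by
        have h5 := mul_le_mul_of_nonneg_left h2 (Real.cosh_pos v).le
        nlinarith
      exact nonneg_of_mul_nonneg_right h4 (mul_pos hu0 (Real.cosh_pos u)))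
    refine le_trans ?_ this
    simpa [GG] using low_bound ht
  · push Not at h
    have := mono_aux (f := fun v => - GG t v) hut (fun v => (hasDerivAt_GG t v).neg) (fun v hv hvu => by
      have h1 := tanh_ratio hu hv
      have h2 := mul_le_mul_of_nonneg_left h.le (hu.trans hv)
      have h3 := mul_le_mul_of_nonneg_left h1 (mul_nonneg ht (Real.sinh_nonneg_iff.2 ht))
      have h4 : 0 ≤ u * Real.cosh u * -(t * (Real.sinh t * Real.sinh v) - v * (Real.cosh v * Real.cosh t)) := by
        have h5 := mul_le_mul_of_nonneg_left h2 (Real.cosh_pos v).le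
        nlinarith
      exact nonneg_of_mul_nonneg_right h4 (mul_pos hu0 (Real.cosh_pos u)))
    simp only [GG_self] at this
    nlinarith [mul_nonneg ht (sq_nonneg (Real.cosh t))]

lemma t_qq (a : ℝ) {t : ℝ} (ht : 0 < t) :
    t * qq a t = (GG t (a*t) - Real.cosh t ^ 2) / (t * Real.cosh t ^ 2) := by
  have hc := (Real.cosh_pos t).ne'
  unfold qq ww' ww GG
  field_simp
  ring

lemma abs_t_qq {a t : ℝ} (ha : 0 ≤ a) (ha1 : a ≤ 1) (ht : 0 < t) : |t * qq a t| ≤ 0.228 := by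
  have hc := Real.cosh_pos t
  have h1 := GG_upper (t := t) (u := a*t) (by positivity) (by nlinarith)
  have h2 := GG_lower (t := t) (u := a*t) (by positivity) (by nlinarith)
  rw [t_qq a ht, abs_le]
  constructor
  · rw [le_div_iff₀ (by positivity)]; nlinarith
  · rw [div_le_iff₀ (by positivity)]; nlinarith

lemma cosh_mul_le {a t : ℝ} (ha : 0 ≤ a) (ha1 : a ≤ 1) (ht : 0 ≤ t) : Real.cosh (a*t) ≤ Real.cosh t :=
  Real.cosh_le_cosh.2 (by
    rw [abs_of_nonneg ht, abs_of_nonneg (by positivity)]; nlinarith)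

lemma ww_nonneg {a t : ℝ} (ha : 0 ≤ a) (ha1 : a ≤ 1) (ht : 0 ≤ t) : 0 ≤ ww a t := by
  unfold ww
  rw [sub_nonneg, div_le_one (Real.cosh_pos t)]
  exact cosh_mul_le ha ha1 ht

lemma ww_le (a t : ℝ) : ww a t ≤ 1 - 1 / Real.cosh t := by
  unfold ww
  have := Real.cosh_pos t
  have := Real.one_le_cosh (a*t)
  gcongr

lemma ww_le_one (a t : ℝ) : ww a t ≤ 1 := by
  have := ww_le a t
  have := one_div_pos.2 (Real.cosh_pos t)
  linarith

lemma ww_le_t {a t : ℝ} (ht : 0 ≤ t) : ww a t ≤ 0.386 * t := by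
  have h1 := ww_le a t
  have h2 := phi_bound ht
  have : 1 - 0.386 * t ≤ 1 / Real.cosh t := by
    rw [le_div_iff₀ (Real.cosh_pos t)]; exact h2
  linarith

lemma ww_le_sq {a t : ℝ} (ht : 0 ≤ t) : ww a t ≤ t^2 := by
  have h1 := ww_le a t
  by_cases h : t ≤ 1.45
  · have := cosh_q1 ht h
    have h3 := Real.cosh_pos t
    have : 1 - t^2 ≤ 1 / Real.cosh t := by
      rw [le_div_iff₀ (Real.cosh_pos t)]
      have := Real.one_le_cosh t
      nlinarith [sq_nonneg t]
    linarith
  · push Not at h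
    have := ww_le_one a t
    nlinarith

lemma ppf_nonneg {a t : ℝ} (ha : 0 ≤ a) (ha1 : a ≤ 1) (ht : 0 ≤ t) : 0 ≤ ppf a t :=
  mul_nonneg (by positivity) (ww_nonneg ha ha1 ht)

lemma ppf_le {a t : ℝ} (ht : 0 ≤ t) : ppf a t ≤ 0.386 := by
  rcases ht.eq_or_lt with rfl | h
  · simp [ppf]; norm_num
  have := ww_le_t (a := a) ht
  unfold ppf
  rw [one_div_mul_eq_div, div_le_iff₀ h]; exact this

lemma ppf_le_t {a t : ℝ} (ht : 0 ≤ t) : ppf a t ≤ t := by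
  rcases ht.eq_or_lt with rfl | h
  · simp [ppf]
  have := ww_le_sq (a := a) ht
  unfold ppf
  rw [one_div_mul_eq_div, div_le_iff₀ h]; nlinarith

lemma ppf_zero (a : ℝ) : ppf a 0 = 0 := by simp [ppf]

lemma hasDerivAt_ppf (a : ℝ) {t : ℝ} (ht : t ≠ 0) : HasDerivAt (ppf a) (qq a t) t := by
  have := ((hasDerivAt_inv ht).mul (hasDerivAt_ww a t))
  have h2 : ppf a = (Inv.inv * ww a) := by ext; simp [ppf]
  rw [h2]
  refine this.congr_deriv ?_
  unfold qq; field_simp; ring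

lemma ppf_cont0 {a : ℝ} (ha : 0 ≤ a) (ha1 : a ≤ 1) : ContinuousWithinAt (ppf a) (Ici 0) 0 := by
  unfold ContinuousWithinAt
  rw [ppf_zero]
  refine tendsto_of_tendsto_of_tendsto_of_le_of_le' (h := fun t => t) tendsto_const_nhds
    (tendsto_nhdsWithin_of_tendsto_nhds tendsto_id) ?_ ?_
  · filter_upwards [self_mem_nhdsWithin] with t ht using ppf_nonneg ha ha1 ht
  · filter_upwards [self_mem_nhdsWithin] with t ht using ppf_le_t ht

lemma ppf_cont {a : ℝ} (ha : 0 ≤ a) (ha1 : a ≤ 1) {s : ℝ} (hs : 0 ≤ s) : ContinuousWithinAt (ppf a) (Ici s) s := by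
  rcases hs.eq_or_lt with rfl | h
  · exact ppf_cont0 ha ha1
  · exact (hasDerivAt_ppf a h.ne').continuousAt.continuousWithinAt

lemma ppf_top {a : ℝ} (ha : 0 ≤ a) (ha1 : a ≤ 1) : Tendsto (ppf a) atTop (nhds 0) := by
  refine tendsto_of_tendsto_of_tendsto_of_le_of_le' (h := fun t => t⁻¹) tendsto_const_nhds
    tendsto_inv_atTop_zero ?_ ?_
  · filter_upwards [eventually_ge_atTop 0] with t ht using ppf_nonneg ha ha1 ht
  · filter_upwards [eventually_gt_atTop 0] with t ht
    unfold ppf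
    rw [one_div]
    have := ww_le_one a t
    have : 0 < t⁻¹ := by positivity
    nlinarith

noncomputable def YY (a t : ℝ) : ℝ :=
  2 * Real.sinh t ^ 2 * Real.cosh (a*t) - 2 * a * Real.sinh (a*t) * Real.sinh t * Real.cosh t
    - (1 - a^2) * Real.cosh t ^ 2 * Real.cosh (a*t)

lemma hasDerivAt_ww' (a t : ℝ) : HasDerivAt (ww' a) (- YY a t / Real.cosh t ^ 3) t := by
  have hc := (Real.cosh_pos t).ne'
  have := (((hasDerivAt_cosh_mul a t).mul (Real.hasDerivAt_sinh t)).sub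
    (((hasDerivAt_sinh_mul a t).const_mul a).mul (Real.hasDerivAt_cosh t))).div
      ((Real.hasDerivAt_cosh t).pow 2) (pow_ne_zero 2 hc)
  refine this.congr_deriv ?_
  unfold YY; simp; field_simp; ring

noncomputable def WW (a t : ℝ) : ℝ := t * ww' a t - ww a t

lemma hasDerivAt_WW (a t : ℝ) : HasDerivAt (WW a) (t * (- YY a t / Real.cosh t ^ 3)) t := by
  have := ((hasDerivAt_id t).mul (hasDerivAt_ww' a t)).sub (hasDerivAt_ww a t)
  refine this.congr_deriv ?_
  simp

lemma YY_cross {a s t : ℝ} (ha : 0 ≤ a) (ha1 : a ≤ 1) (hs : 0 ≤ s) (hst : s ≤ t) (h : 0 < YY a s) :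
    0 < YY a t := by
  have key := mono_aux (f := fun t => YY a t / Real.cosh (a*t))
    (f' := fun t => 2 * (Real.sinh t - a * (Real.sinh (a*t) / Real.cosh (a*t)) * Real.cosh t) *
      (Real.cosh t - a * (Real.sinh (a*t) / Real.cosh (a*t)) * Real.sinh t)) hst
    (fun t => by
      have hc := (Real.cosh_pos (a*t)).ne'
      have h1 := (((Real.hasDerivAt_sinh t).pow 2).const_mul 2).mul (hasDerivAt_cosh_mul a t)
      have h2 := (((hasDerivAt_sinh_mul a t).const_mul (2*a)).mul (Real.hasDerivAt_sinh t)).mul (Real.hasDerivAt_cosh t)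
      have h3 := (((Real.hasDerivAt_cosh t).pow 2).const_mul (1-a^2)).mul (hasDerivAt_cosh_mul a t)
      have := ((h1.sub h2).sub h3).div (hasDerivAt_cosh_mul a t) hc
      refine this.congr_deriv ?_
      have e1 : Real.cosh (a*t)^2 = Real.sinh (a*t)^2 + 1 := Real.cosh_sq _
      have e2 : Real.cosh t^2 = Real.sinh t^2 + 1 := Real.cosh_sq _
      simp
      rw [div_eq_iff (pow_ne_zero 2 hc)]
      field_simp
      ring)
    (fun t ht _ => by
      have ht0 := hs.trans ht
      have hc := Real.cosh_pos (a*t)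
      have hat : 0 ≤ a * t := by positivity
      have hsa := Real.sinh_nonneg_iff.2 hat
      have hst := Real.sinh_nonneg_iff.2 ht0
      have hT : Real.sinh (a*t) / Real.cosh (a*t) * Real.cosh t ≤ Real.sinh t := by
        have : 0 ≤ Real.sinh (t - a*t) := Real.sinh_nonneg_iff.2 (by nlinarith)
        rw [Real.sinh_sub] at this
        rw [div_mul_eq_mul_div, div_le_iff₀ hc]; linarith
      have hT1 : Real.sinh (a*t) / Real.cosh (a*t) ≤ 1 := by
        rw [div_le_one hc]; exact (Real.sinh_lt_cosh _).le
      have hT0 : 0 ≤ Real.sinh (a*t) / Real.cosh (a*t) := by positivity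
      have hct := Real.cosh_pos t
      have := (Real.sinh_lt_cosh t).le
      generalize Real.sinh (a*t) / Real.cosh (a*t) = A at *
      have h1 : 0 ≤ Real.sinh t - a * A * Real.cosh t := by
        have : a * (A * Real.cosh t) ≤ 1 * (A * Real.cosh t) := by gcongr
        linarith
      have h2 : 0 ≤ Real.cosh t - a * A * Real.sinh t := by
        have : a * A ≤ 1 := by nlinarith
        have := mul_le_mul_of_nonneg_right this hst
        linarith
      positivity)
  have h1 : 0 < YY a s / Real.cosh (a*s) := div_pos h (Real.cosh_pos _)
  have h2 := h1.trans_le key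
  exact (div_pos_iff_of_pos_right (Real.cosh_pos _)).1 h2

lemma WW_zero (a : ℝ) : WW a 0 = 0 := by simp [WW, ww]

lemma WW_cross {a s t : ℝ} (ha : 0 ≤ a) (ha1 : a ≤ 1) (hs : 0 ≤ s) (hst : s ≤ t) (h : WW a s < 0) :
    WW a t < 0 := by
  have : ∃ r, 0 ≤ r ∧ r ≤ s ∧ 0 < YY a r := by
    by_contra! hcon
    have := mono_aux hs (fun t => hasDerivAt_WW a t) (fun r hr hrs => by
      have := hcon r hr hrs
      have := Real.cosh_pos r
      have : 0 ≤ - YY a r := by linarith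
      positivity)
    rw [WW_zero] at this
    linarith
  obtain ⟨r, hr, hrs, hY⟩ := this
  have := mono_aux (f := fun t => - WW a t) hst (fun t => (hasDerivAt_WW a t).neg) (fun v hv _ => by
      have := YY_cross ha ha1 hr (hrs.trans hv) hY
      have := Real.cosh_pos v
      have := hs.trans hv
      rw [neg_div, mul_neg, neg_neg]
      positivity)
  linarith

lemma ppf_cont0' {a : ℝ} (ha : 0 ≤ a) (ha1 : a ≤ 1) {s : ℝ} (hs : 0 ≤ s) : ContinuousWithinAt (ppf a) (Ici 0) s := by
  rcases hs.eq_or_lt with rfl | h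
  · exact ppf_cont0 ha ha1
  · exact (hasDerivAt_ppf a h.ne').continuousAt.continuousWithinAt

lemma qq_int {a : ℝ} (ha : 0 ≤ a) (ha1 : a ≤ 1) :
    IntegrableOn (qq a) (Ioi 0) ∧ ∫ t in Ioi 0, |qq a t| ≤ 0.772 := by
  by_cases hS : ∀ s, 0 < s → 0 ≤ WW a s
  · have hq : ∀ t ∈ Ioi (0:ℝ), 0 ≤ qq a t := fun t ht => div_nonneg (hS t ht) (sq_nonneg t)
    have h1 := integrableOn_Ioi_deriv_of_nonneg (ppf_cont0 ha ha1)
      (fun t ht => hasDerivAt_ppf a (ne_of_gt ht)) hq (ppf_top ha ha1)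
    have h2 := integral_Ioi_of_hasDerivAt_of_nonneg (ppf_cont0 ha ha1)
      (fun t ht => hasDerivAt_ppf a (ne_of_gt ht)) hq (ppf_top ha ha1)
    refine ⟨h1, ?_⟩
    rw [setIntegral_congr_fun measurableSet_Ioi (fun t ht => abs_of_nonneg (hq t ht)), h2, ppf_zero]
    norm_num
  · push Not at hS
    set S : Set ℝ := {s | 0 < s ∧ WW a s < 0} with hSdef
    have hne : S.Nonempty := hS
    have hbd : BddBelow S := ⟨0, fun s hs => hs.1.le⟩
    set b := sInf S with hb
    have hb0 : 0 ≤ b := le_csInf hne (fun s hs => hs.1.le)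
    have hlo : ∀ t ∈ Ioo 0 b, 0 ≤ qq a t := fun t ht => div_nonneg (by
      by_contra! hcon
      exact absurd (csInf_le hbd (show t ∈ S from ⟨ht.1, hcon⟩)) (not_le.2 ht.2)) (sq_nonneg t)
    have hhi : ∀ t ∈ Ioi b, qq a t ≤ 0 := fun t ht => by
      obtain ⟨s, hs, hst⟩ := exists_lt_of_csInf_lt hne ht
      exact div_nonpos_of_nonpos_of_nonneg (WW_cross ha ha1 hs.1.le hst.le hs.2).le (sq_nonneg t)
    have hd : ∀ t ∈ Ioi b, HasDerivAt (ppf a) (qq a t) t := fun t ht =>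
      hasDerivAt_ppf a (ne_of_gt (lt_of_le_of_lt hb0 ht))
    have i2 := integrableOn_Ioi_deriv_of_nonpos (ppf_cont ha ha1 hb0) hd hhi (ppf_top ha ha1)
    have e2 := integral_Ioi_of_hasDerivAt_of_nonpos (ppf_cont ha ha1 hb0) hd hhi (ppf_top ha ha1)
    have hcont : ContinuousOn (ppf a) (Icc 0 b) := fun t ht => 
      (ppf_cont0' ha ha1 ht.1).mono Icc_subset_Ici_self
    have i1 := intervalIntegral.integrableOn_deriv_of_nonneg hcont
      (fun t ht => hasDerivAt_ppf a (ne_of_gt ht.1)) hlo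
    have e1 := intervalIntegral.integral_eq_sub_of_hasDerivAt_of_le hb0 hcont
      (fun t ht => hasDerivAt_ppf a (ne_of_gt ht.1)) ((intervalIntegrable_iff_integrableOn_Ioc_of_le hb0).2 i1)
    have hU : Ioc 0 b ∪ Ioi b = Ioi (0:ℝ) := Ioc_union_Ioi_eq_Ioi hb0
    rw [← hU]
    refine ⟨i1.union i2, ?_⟩
    rw [setIntegral_union (by
      rw [Set.disjoint_left]; intro t h1 h2; exact absurd h1.2 (not_le.2 h2)) measurableSet_Ioi i1.abs i2.abs]
    have f2 : ∫ t in Ioi b, |qq a t| = ppf a b := by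
      rw [setIntegral_congr_fun measurableSet_Ioi (fun t ht => abs_of_nonpos (hhi t ht)), integral_neg, e2]; ring
    have f1 : ∫ t in Ioc 0 b, |qq a t| = ppf a b := by
      rw [intervalIntegral.integral_of_le hb0] at e1
      rw [integral_Ioc_eq_integral_Ioo] at e1 ⊢
      rw [setIntegral_congr_fun measurableSet_Ioo (fun t ht => abs_of_nonneg (hlo t ht)), e1, ppf_zero]; ring
    rw [f1, f2]
    have := ppf_le (a := a) hb0
    linarith

def LapOK (g : ℝ → ℝ) : Prop := ∀ x : ℝ, 0 < x → IntegrableOn (fun t => Real.exp (-x * t) * g t) (Ioi 0)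

lemma LapOK.mul_t {g : ℝ → ℝ} (h : LapOK g) : LapOK (fun t => t * g t) := by
  intro x hx
  have h1 := h (x/2) (by positivity)
  have h2 : IntegrableOn (fun t => (t * Real.exp (-(x/2) * t)) * (Real.exp (-(x/2) * t) * g t)) (Ioi 0) := by
    refine Integrable.bdd_mul (c := 2/x) h1 (by fun_prop) ?_
    filter_upwards [ae_restrict_mem measurableSet_Ioi] with t ht
    have ht' : 0 < t := ht
    rw [Real.norm_eq_abs, abs_of_nonneg (by positivity)]
    have := Real.add_one_le_exp ((x/2) * t)
    rw [neg_mul, Real.exp_neg, ← div_eq_mul_inv, div_le_div_iff₀ (Real.exp_pos _) hx]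
    nlinarith
  refine h2.congr_fun (fun t _ => ?_) measurableSet_Ioi
  have : Real.exp (-x * t) = Real.exp (-(x/2) * t) * Real.exp (-(x/2) * t) := by
    rw [← Real.exp_add]; ring_nf
  simp only [this]; ring

lemma LapOK.pow_t {g : ℝ → ℝ} (h : LapOK g) (n : ℕ) : LapOK (fun t => t ^ n * g t) := by
  induction n with
  | zero => simpa using h
  | succ n ih =>
    have := ih.mul_t
    convert this using 2; ring

lemma LapOK.of_bdd {g : ℝ → ℝ} {C : ℝ} (hm : AEStronglyMeasurable g (volume.restrict (Ioi 0)))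
    (hb : ∀ t, 0 < t → |g t| ≤ C) : LapOK g := by
  intro x hx
  have h1 : IntegrableOn (fun t => Real.exp (-x * t)) (Ioi 0) := integrableOn_exp_mul_Ioi (by linarith) 0
  refine Integrable.mul_bdd (c := C) h1 hm ?_
  filter_upwards [ae_restrict_mem measurableSet_Ioi] with t ht using hb t ht

lemma LapOK.of_int {g : ℝ → ℝ} (hi : IntegrableOn g (Ioi 0)) : LapOK g := by
  intro x hx
  refine Integrable.bdd_mul (c := 1) hi (by fun_prop) ?_
  filter_upwards [ae_restrict_mem measurableSet_Ioi] with t ht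
  have ht' : 0 < t := ht
  rw [Real.norm_eq_abs, abs_of_nonneg (by positivity), Real.exp_le_one_iff]
  nlinarith

lemma LapOK.hasDerivAt {g : ℝ → ℝ} (h : LapOK g) {x : ℝ} (hx : 0 < x) :
    HasDerivAt (LaplaceTransform g) (-LaplaceTransform (fun t => t * g t) x) x := by
  have hb := (h.mul_t (x/2) (by positivity)).norm
  have hd := hasDerivAt_integral_of_dominated_loc_of_deriv_le (μ := volume.restrict (Ioi (0:ℝ)))
    (F := fun x t => Real.exp (-x * t) * g t) (F' := fun x t => -(Real.exp (-x * t) * (t * g t)))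
    (x₀ := x) (s := Ioi (x/2)) (bound := fun t => ‖Real.exp (-(x/2) * t) * (t * g t)‖)
    (Ioi_mem_nhds (by linarith)) ?_ (h x hx) (h.mul_t x hx).neg.aestronglyMeasurable ?_ hb ?_
  · have := hd.2
    rw [integral_neg] at this
    exact this
  · filter_upwards [Ioi_mem_nhds hx] with y hy using (h y hy).aestronglyMeasurable
  · filter_upwards [ae_restrict_mem measurableSet_Ioi] with t ht y hy
    have ht' : 0 < t := ht
    have hy' : x/2 < y := hy
    rw [norm_neg, norm_mul, norm_mul (Real.exp (-(x/2) * t))]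
    refine mul_le_mul_of_nonneg_right ?_ (norm_nonneg _)
    rw [Real.norm_eq_abs, Real.norm_eq_abs, abs_of_pos (Real.exp_pos _), abs_of_pos (Real.exp_pos _)]
    apply Real.exp_le_exp.2; nlinarith
  · filter_upwards with t y hy
    have : HasDerivAt (fun y => Real.exp (-y * t)) (Real.exp (-y*t) * (-1 * t)) y :=
      ((hasDerivAt_id y).neg.mul_const t).exp
    refine (this.mul_const (g t)).congr_deriv ?_
    ring

lemma LapOK.contDiffOn_nat {g : ℝ → ℝ} (h : LapOK g) (n : ℕ) : ContDiffOn ℝ n (LaplaceTransform g) (Ioi 0) := by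
  induction n generalizing g with
  | zero =>
    rw [Nat.cast_zero, contDiffOn_zero]
    exact fun x hx => (h.hasDerivAt hx).continuousAt.continuousWithinAt
  | succ n ih =>
    have : ((n + 1 : ℕ) : WithTop ℕ∞) = (n : WithTop ℕ∞) + 1 := by norm_cast
    rw [this, contDiffOn_succ_iff_deriv_of_isOpen isOpen_Ioi]
    refine ⟨fun x hx => (h.hasDerivAt hx).differentiableAt.differentiableWithinAt, by simp, ?_⟩
    exact (ih h.mul_t).neg.congr (fun x hx => (h.hasDerivAt hx).deriv)

lemma LapOK.contDiffAt {g : ℝ → ℝ} (h : LapOK g) {x : ℝ} (hx : 0 < x) :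
    ContDiffAt ℝ (⊤ : ℕ∞) (LaplaceTransform g) x := by
  have : ContDiffOn ℝ (⊤ : ℕ∞) (LaplaceTransform g) (Ioi 0) := contDiffOn_infty.2 h.contDiffOn_nat
  exact this.contDiffAt (Ioi_mem_nhds hx)

lemma LapOK.iterDeriv {g : ℝ → ℝ} (h : LapOK g) (n : ℕ) {x : ℝ} (hx : 0 < x) :
    iteratedDeriv n (LaplaceTransform g) x = (-1)^n * LaplaceTransform (fun t => t^n * g t) x := by
  induction n generalizing x with
  | zero => simp
  | succ n ih =>
    rw [iteratedDeriv_succ]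
    have : iteratedDeriv n (LaplaceTransform g) =ᶠ[nhds x]
        fun x => (-1)^n * LaplaceTransform (fun t => t^n * g t) x := by
      filter_upwards [Ioi_mem_nhds hx] with y hy using ih hy
    rw [this.deriv_eq, (((h.pow_t n).hasDerivAt hx).const_mul _).deriv]
    have e : (fun t => t * (t^n * g t)) = fun t => t^(n+1) * g t := by ext; ring
    rw [e]; ring

lemma LapOK.cm {g : ℝ → ℝ} (h : LapOK g) (hg : ∀ t, 0 < t → 0 ≤ g t) :
    CompletelyMonotonic (LaplaceTransform g) := by
  refine ⟨fun x hx => h.contDiffAt hx, fun n x hx => ?_⟩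
  rw [h.iterDeriv n hx, ← mul_assoc, ← mul_pow]
  simp only [mul_neg, mul_one, neg_neg, one_pow, one_mul]
  refine setIntegral_nonneg measurableSet_Ioi (fun t ht => ?_)
  have ht' : 0 < t := ht
  have := hg t ht
  positivity

lemma CM_congr {f g : ℝ → ℝ} (hg : CompletelyMonotonic g) (h : ∀ x, 0 < x → f x = g x) :
    CompletelyMonotonic f := by
  have he : ∀ x, 0 < x → f =ᶠ[nhds x] g := fun x hx => by
    filter_upwards [Ioi_mem_nhds hx] with y hy using h y hy
  refine ⟨fun x hx => (hg.1 x hx).congr_of_eventuallyEq (he x hx), fun n x hx => ?_⟩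
  rw [(he x hx).iteratedDeriv_eq n]
  exact hg.2 n x hx

/-! ### resolvent kernel -/

/-- Given `q` integrable on `(0,∞)` with norm `≤ N < 1` and `|t q| ≤ M`, `M/(1-N) ≤ 1`. -/
noncomputable def bseq (q : ℝ → ℝ) : ℕ → ℝ → ℝ
  | 0 => (Ioi (0:ℝ)).indicator (fun t => t * q t)
  | n+1 => fun t => ∫ u, (Ioi (0:ℝ)).indicator q u * bseq q n (t - u)

lemma bseq_meas {q : ℝ → ℝ} (hm : Measurable q) (n : ℕ) : StronglyMeasurable (bseq q n) := by
  induction n with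
  | zero =>
    exact ((measurable_id.mul hm).indicator measurableSet_Ioi).stronglyMeasurable
  | succ n ih =>
    have : StronglyMeasurable (Function.uncurry fun t u => (Ioi (0:ℝ)).indicator q u * bseq q n (t - u)) := by
      apply Measurable.stronglyMeasurable
      exact ((hm.indicator measurableSet_Ioi).comp measurable_snd).mul
        (ih.measurable.comp (measurable_fst.sub measurable_snd))
    exact this.integral_prod_right

lemma bseq_supp {q : ℝ → ℝ} (n : ℕ) {t : ℝ} (ht : t ≤ 0) : bseq q n t = 0 := by
  induction n generalizing t with
  | zero => exact indicator_of_notMem (by simpa using ht) _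
  | succ n ih =>
    simp only [bseq]
    rw [← integral_zero ℝ ℝ]
    congr 1; ext u
    by_cases hu : 0 < u
    · rw [ih (by linarith)]; simp
    · rw [indicator_of_notMem (by simpa using hu)]; simp

lemma bseq_bdd {q : ℝ → ℝ} {M N : ℝ} (hi : IntegrableOn q (Ioi 0)) (hM0 : 0 ≤ M)
    (hM : ∀ t, 0 < t → |t * q t| ≤ M) (hN : ∫ t in Ioi 0, |q t| ≤ N) (n : ℕ) (t : ℝ) :
    |bseq q n t| ≤ M * N^n := by
  have hN0 : 0 ≤ N := le_trans (integral_nonneg (fun t => abs_nonneg _)) hN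
  induction n generalizing t with
  | zero =>
    by_cases ht : 0 < t
    · simp only [bseq]; rw [indicator_of_mem (by exact ht)]; simpa using hM t ht
    · rw [bseq_supp 0 (not_lt.1 ht)]; simpa
  | succ n ih =>
    have hq : Integrable ((Ioi (0:ℝ)).indicator q) := (integrable_indicator_iff measurableSet_Ioi).2 hi
    have := norm_integral_le_of_norm_le (f := fun u => (Ioi (0:ℝ)).indicator q u * bseq q n (t - u))
      (hq.norm.mul_const (M * N^n)) (Eventually.of_forall fun u => by
        rw [norm_mul]; gcongr; exact ih _)
    rw [integral_mul_const] at this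
    have e : ∫ u, ‖(Ioi (0:ℝ)).indicator q u‖ = ∫ t in Ioi 0, |q t| := by
      rw [← integral_indicator measurableSet_Ioi]
      congr 1; ext u
      rw [norm_indicator_eq_indicator_norm]; rfl
    rw [e] at this
    calc _ ≤ _ := this
      _ ≤ N * (M * N^n) := by gcongr
      _ = _ := by ring

lemma bseq_lap {q : ℝ → ℝ} {M N : ℝ} (hm : Measurable q) (hi : IntegrableOn q (Ioi 0)) (hM0 : 0 ≤ M)
    (hM : ∀ t, 0 < t → |t * q t| ≤ M) (hN : ∫ t in Ioi 0, |q t| ≤ N) {x : ℝ} (hx : 0 < x) (n : ℕ) :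
    LaplaceTransform (bseq q n) x = LaplaceTransform (fun t => t * q t) x * LaplaceTransform q x ^ n := by
  have full : ∀ g : ℝ → ℝ, (∀ t, t ≤ 0 → g t = 0) → 
      (∫ t, Real.exp (-x*t) * g t) = LaplaceTransform g x := fun g hg => by
    unfold LaplaceTransform
    rw [← integral_indicator measurableSet_Ioi]
    congr 1; ext t
    by_cases ht : 0 < t
    · rw [indicator_of_mem (by exact ht)]
    · rw [indicator_of_notMem (by simpa using ht), hg t (not_lt.1 ht), mul_zero]
  have fullI : ∀ g : ℝ → ℝ, (∀ t, t ≤ 0 → g t = 0) → LapOK g → 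
      Integrable (fun t => Real.exp (-x*t) * g t) := fun g hg hok => by
    refine (integrableOn_iff_integrable_of_support_subset ?_).1 (hok x hx)
    intro t ht
    by_contra hcon
    exact ht (by simp [hg t (not_lt.1 hcon)])
  induction n with
  | zero =>
    simp only [pow_zero, mul_one, bseq]
    unfold LaplaceTransform
    exact setIntegral_congr_fun measurableSet_Ioi (fun t ht => by simp only [indicator_of_mem ht])
  | succ n ih =>
    set Q := (Ioi (0:ℝ)).indicator q with hQ
    have hQ0 : ∀ t, t ≤ 0 → Q t = 0 := fun t ht => indicator_of_notMem (by simpa using ht) _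
    have hQL : LaplaceTransform Q x = LaplaceTransform q x :=
      setIntegral_congr_fun measurableSet_Ioi (fun t ht => by simp only [hQ, indicator_of_mem ht])
    have hQok : LapOK Q := LapOK.of_int ((integrable_indicator_iff measurableSet_Ioi).2 hi).integrableOn
    have hb : LapOK (bseq q n) := LapOK.of_bdd (bseq_meas hm n).aestronglyMeasurable
      (fun t _ => bseq_bdd hi hM0 hM hN n t)
    have key := integral_convolution (ContinuousLinearMap.mul ℝ ℝ) (fullI Q hQ0 hQok)
      (fullI _ (fun t => bseq_supp n) hb)
    rw [full Q hQ0, full _ (fun t => bseq_supp n), hQL, ih] at key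
    rw [← full _ (fun t => bseq_supp (n+1))]
    rw [pow_succ]
    have e : (fun t => Real.exp (-x*t) * bseq q (n+1) t) = 
       (convolution (fun t => Real.exp (-x*t) * Q t) (fun t => Real.exp (-x*t) * bseq q n t) (ContinuousLinearMap.mul ℝ ℝ) volume) := by
      ext t
      simp only [bseq, convolution, ContinuousLinearMap.mul_apply']
      rw [← integral_const_mul]
      congr 1; ext u
      have : Real.exp (-x*t) = Real.exp (-x*u) * Real.exp (-x*(t-u)) := by
        rw [← Real.exp_add]; ring_nf
      rw [this]; ring
    rw [e, key]
    simp only [ContinuousLinearMap.mul_apply']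
    ring

lemma resolvent_kernel {q : ℝ → ℝ} {M N ε : ℝ} (hm : Measurable q) (hi : IntegrableOn q (Ioi 0)) (hM0 : 0 ≤ M)
    (hM : ∀ t, 0 < t → |t * q t| ≤ M) (hN : ∫ t in Ioi 0, |q t| ≤ N) (hN1 : N < 1) (hMN : M ≤ 1 - N)
    (hε : |ε| = 1) :
    ∃ r : ℝ → ℝ, Measurable r ∧ (∀ t, |r t| ≤ 1) ∧ ∀ x, 0 < x →
      LaplaceTransform r x * (1 + ε * LaplaceTransform q x) = LaplaceTransform (fun t => t * q t) x ∧
      |LaplaceTransform q x| ≤ N := by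
  have hN0 : 0 ≤ N := le_trans (integral_nonneg (fun t => abs_nonneg _)) hN
  have hbd : ∀ n t, ‖(-ε)^n * bseq q n t‖ ≤ M * N^n := fun n t => by
    rw [norm_mul, norm_pow, norm_neg, Real.norm_eq_abs ε, hε, one_pow, one_mul]
    exact bseq_bdd hi hM0 hM hN n t
  have hgs : HasSum (fun n => M * N^n) (M * (1-N)⁻¹) := (hasSum_geometric_of_lt_one hN0 hN1).mul_left M
  have hLq : ∀ x, 0 < x → |LaplaceTransform q x| ≤ N := fun x hx => by
    refine le_trans ?_ hN
    refine norm_integral_le_of_norm_le (f := fun t => Real.exp (-x * t) * q t) (hi.norm) ?_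
    filter_upwards [ae_restrict_mem measurableSet_Ioi] with t ht
    have ht' : 0 < t := ht
    rw [norm_mul, Real.norm_eq_abs, abs_of_pos (Real.exp_pos _)]
    have : Real.exp (-x*t) ≤ 1 := Real.exp_le_one_iff.2 (by nlinarith)
    exact mul_le_of_le_one_left (norm_nonneg _) this
  refine ⟨fun t => ∑' n, (-ε)^n * bseq q n t, ?_, ?_, ?_⟩
  · exact Measurable.tsum (fun n => (bseq_meas hm n).measurable.const_mul _)
  · intro t
    have := tsum_of_norm_bounded hgs (fun n => hbd n t)
    refine le_trans this ?_
    rw [← div_eq_mul_inv, div_le_one (by linarith)]; exact hMN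
  · intro x hx
    refine ⟨?_, hLq x hx⟩
    have h1 : ∀ n, IntegrableOn (fun t => Real.exp (-x*t) * ((-ε)^n * bseq q n t)) (Ioi 0) := fun n =>
      LapOK.of_bdd ((bseq_meas hm n).measurable.const_mul _).aestronglyMeasurable (fun t _ => hbd n t) x hx
    have hexp : IntegrableOn (fun t => Real.exp (-x * t)) (Ioi 0) := integrableOn_exp_mul_Ioi (by linarith) 0
    have h2 : Summable fun n => ∫ t in Ioi 0, ‖Real.exp (-x*t) * ((-ε)^n * bseq q n t)‖ := by
      refine Summable.of_nonneg_of_le (fun n => integral_nonneg (fun t => norm_nonneg _)) (fun n => ?_)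
        (hgs.summable.mul_left (∫ t in Ioi 0, Real.exp (-x*t)))
      rw [← integral_mul_const]
      refine integral_mono (h1 n).norm (hexp.mul_const _) (fun t => ?_)
      simp only [norm_mul (Real.exp _), Real.norm_eq_abs, Real.abs_exp]
      gcongr
      exact hbd n t
    have h3 := hasSum_integral_of_summable_integral_norm h1 h2
    have e1 : (∫ t in Ioi 0, ∑' n, Real.exp (-x*t) * ((-ε)^n * bseq q n t)) =
        LaplaceTransform (fun t => ∑' n, (-ε)^n * bseq q n t) x := by
      unfold LaplaceTransform
      congr 1; ext t
      rw [tsum_mul_left]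
    rw [e1] at h3
    have e2 : ∀ n, ∫ t in Ioi 0, Real.exp (-x*t) * ((-ε)^n * bseq q n t) =
        LaplaceTransform (fun t => t * q t) x * (-(ε * LaplaceTransform q x))^n := fun n => by
      have := bseq_lap hm hi hM0 hM hN hx n
      unfold LaplaceTransform at this ⊢
      simp_rw [mul_left_comm _ ((-ε)^n)]
      rw [integral_const_mul, this, ← neg_mul, mul_pow]; ring
    simp_rw [e2] at h3
    have hlt : |-(ε * LaplaceTransform q x)| < 1 := by
      rw [abs_neg, abs_mul, hε, one_mul]; exact (hLq x hx).trans_lt hN1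
    have h4 := (hasSum_geometric_of_abs_lt_one hlt).mul_left (LaplaceTransform (fun t => t * q t) x)
    rw [h3.unique h4]
    have := (abs_lt.1 hlt).2
    have hne : 1 - -(ε * LaplaceTransform q x) ≠ 0 := by linarith
    rw [sub_neg_eq_add] at hne ⊢
    field_simp

lemma meas_ppf (a : ℝ) : Measurable (ppf a) := by
  have h1 : Measurable fun t : ℝ => Real.cosh (a*t) := Real.measurable_cosh.comp (measurable_const.mul measurable_id)
  have h2 : Measurable fun t : ℝ => Real.cosh t := Real.measurable_cosh
  unfold ppf ww
  fun_prop

lemma meas_qq (a : ℝ) : Measurable (qq a) := by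
  have h1 : Measurable fun t : ℝ => Real.cosh (a*t) := Real.measurable_cosh.comp (measurable_const.mul measurable_id)
  have h2 : Measurable fun t : ℝ => Real.cosh t := Real.measurable_cosh
  have h3 : Measurable fun t : ℝ => Real.sinh (a*t) := Real.measurable_sinh.comp (measurable_const.mul measurable_id)
  have h4 : Measurable fun t : ℝ => Real.sinh t := Real.measurable_sinh
  unfold qq ww' ww
  fun_prop

lemma lapok_ppf {a : ℝ} (ha : 0 ≤ a) (ha1 : a ≤ 1) : LapOK (ppf a) :=
  LapOK.of_bdd (C := 0.386) (meas_ppf a).aestronglyMeasurable fun t ht => by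
    rw [abs_of_nonneg (ppf_nonneg ha ha1 ht.le)]; exact ppf_le ht.le

lemma lapok_one : LapOK (fun _ => 1) :=
  LapOK.of_bdd (C := 1) (by fun_prop) fun t ht => by simp

lemma lap_one {x : ℝ} (hx : 0 < x) : LaplaceTransform (fun _ => 1) x = 1 / x := by
  unfold LaplaceTransform
  simp only [mul_one]
  rw [integral_exp_mul_Ioi (by linarith)]
  simp

lemma lapok_tau {a : ℝ} (ha : 0 ≤ a) (ha1 : a ≤ 1) (ε : ℝ) : LapOK (fun t => 1 + ε * ppf a t) := by
  intro x hx
  refine ((lapok_one x hx).add ((lapok_ppf ha ha1 x hx).const_mul ε)).congr (Eventually.of_forall fun t => ?_)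
  simp only [Pi.add_apply]; ring

lemma lap_tau {a : ℝ} (ha : 0 ≤ a) (ha1 : a ≤ 1) (ε : ℝ) {x : ℝ} (hx : 0 < x) :
    LaplaceTransform (fun t => 1 + ε * ppf a t) x = 1 / x + ε * LaplaceTransform (ppf a) x := by
  rw [← lap_one hx]
  unfold LaplaceTransform
  rw [← integral_const_mul, ← integral_add (lapok_one x hx) ((lapok_ppf ha ha1 x hx).const_mul ε)]
  congr 1; ext t; ring

lemma lap_qq {a : ℝ} (ha : 0 ≤ a) (ha1 : a ≤ 1) {x : ℝ} (hx : 0 < x) :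
    LaplaceTransform (qq a) x = x * LaplaceTransform (ppf a) x := by
  have hqi := LapOK.of_int (qq_int ha ha1).1 x hx
  have hpi := lapok_ppf ha ha1 x hx
  have hexp : Tendsto (fun t : ℝ => Real.exp (-x * t)) atTop (nhds 0) := by
    apply Real.tendsto_exp_atBot.comp
    exact tendsto_id.const_mul_atTop_of_neg (by linarith)
  have := integral_Ioi_of_hasDerivAt_of_tendsto (a := 0) (m := 0)
    (f := fun t => Real.exp (-x*t) * ppf a t)
    (f' := fun t => Real.exp (-x*t) * qq a t - x * (Real.exp (-x*t) * ppf a t)) ?_ ?_ ?_ ?_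
  · rw [integral_sub hqi (hpi.const_mul x), integral_const_mul, ppf_zero] at this
    unfold LaplaceTransform
    linarith
  · exact ContinuousWithinAt.mul (by fun_prop) (ppf_cont0 ha ha1)
  · intro t ht
    have h1 : HasDerivAt (fun t => Real.exp (-x * t)) (Real.exp (-x*t) * (-x * 1)) t :=
      ((hasDerivAt_id t).const_mul (-x)).exp
    refine (h1.mul (hasDerivAt_ppf a (ne_of_gt ht))).congr_deriv ?_
    ring
  · exact hqi.sub (hpi.const_mul x)
  · simpa using hexp.mul (ppf_top ha ha1)

lemma logcm_tau {a : ℝ} (ha : 0 ≤ a) (ha1 : a ≤ 1) {ε : ℝ} (hε : |ε| = 1) :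
    LogCompletelyMonotonic (LaplaceTransform (fun t => 1 + ε * ppf a t)) := by
  obtain ⟨r, hrm, hr1, hr⟩ := resolvent_kernel (M := 0.228) (N := 0.772) (meas_qq a) (qq_int ha ha1).1
    (by norm_num) (fun t ht => abs_t_qq ha ha1 ht) (qq_int ha ha1).2 (by norm_num) (by norm_num) hε
  have hf : ∀ x, 0 < x → LaplaceTransform (fun t => 1 + ε * ppf a t) x =
      (1 + ε * LaplaceTransform (qq a) x) / x := fun x hx => by
    rw [lap_tau ha ha1 ε hx, lap_qq ha ha1 hx]; field_simp
  have hpos : ∀ x, 0 < x → 0 < 1 + ε * LaplaceTransform (qq a) x := fun x hx => by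
    have := (hr x hx).2
    have h2 : |ε * LaplaceTransform (qq a) x| ≤ 0.772 := by rw [abs_mul, hε, one_mul]; exact this
    have := (abs_le.1 h2).1
    norm_num at this ⊢; linarith
  refine ⟨fun x hx => ?_, fun x hx => (lapok_tau ha ha1 ε).contDiffAt hx, ?_⟩
  · rw [hf x hx]; exact div_pos (hpos x hx) hx
  · have hrε : ∀ t, |ε * r t| ≤ 1 := fun t => by rw [abs_mul, hε, one_mul]; exact hr1 t
    have hrok : LapOK r := LapOK.of_bdd hrm.aestronglyMeasurable (fun t _ => hr1 t)
    have hok : LapOK (fun t => 1 + ε * r t) := LapOK.of_bdd (C := 2)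
      (measurable_const.add (hrm.const_mul ε)).aestronglyMeasurable (fun t _ => by
        have := abs_le.1 (hrε t); rw [abs_le]; constructor <;> linarith [this.1, this.2])
    refine CM_congr (hok.cm fun t _ => by linarith [(abs_le.1 (hrε t)).1]) fun x hx => ?_
    have he : LaplaceTransform (fun t => 1 + ε * r t) x = 1 / x + ε * LaplaceTransform r x := by
      rw [← lap_one hx]
      unfold LaplaceTransform
      rw [← integral_const_mul, ← integral_add (lapok_one x hx) ((hrok x hx).const_mul ε)]
      congr 1; ext t; ring
    have hev : LaplaceTransform (fun t => 1 + ε * ppf a t) =ᶠ[nhds x]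
        fun x => (1 + ε * LaplaceTransform (qq a) x) / x := by
      filter_upwards [Ioi_mem_nhds hx] with y hy using hf y hy
    have hd : HasDerivAt (fun x => (1 + ε * LaplaceTransform (qq a) x) / x)
      (((ε * -LaplaceTransform (fun t => t * qq a t) x) * x - (1 + ε * LaplaceTransform (qq a) x) * 1) / x^2) x :=
      HasDerivAt.div ((((LapOK.of_int (qq_int ha ha1).1).hasDerivAt hx).const_mul ε).const_add 1) (hasDerivAt_id x) hx.ne'
    rw [he, hev.deriv_eq, hd.deriv, hf x hx, ← (hr x hx).1]
    have := (hpos x hx).ne'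
    field_simp
    ring

lemma frull_int {c d : ℝ} (hc : 0 < c) (hd : 0 < d) :
    IntegrableOn (fun t : ℝ => t⁻¹ * (Real.exp (-c*t) - Real.exp (-d*t))) (Ioi 0) := by
  have key : ∀ c d t : ℝ, 0 < t → t⁻¹ * (Real.exp (-c*t) - Real.exp (-d*t)) ≤
      |d - c| * (Real.exp (-c*t) + Real.exp (-d*t)) := by
    intro c d t ht
    have h1 := Real.add_one_le_exp (-(d-c)*t)
    have h2 : Real.exp (-d*t) = Real.exp (-c*t) * Real.exp (-(d-c)*t) := by
      rw [← Real.exp_add]; ring_nf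
    have h3 : Real.exp (-c*t) - Real.exp (-d*t) ≤ (d-c)*t * Real.exp (-c*t) := by
      rw [h2]; nlinarith [Real.exp_pos (-c*t)]
    have h4 : (d-c)*t * Real.exp (-c*t) ≤ t * (|d - c| * (Real.exp (-c*t) + Real.exp (-d*t))) := by
      have := le_abs_self (d-c)
      calc (d-c)*t * Real.exp (-c*t) ≤ |d-c| * t * Real.exp (-c*t) := by gcongr
        _ ≤ |d-c| * t * (Real.exp (-c*t) + Real.exp (-d*t)) := by
          gcongr; linarith [Real.exp_pos (-d*t)]
        _ = _ := by ring
    rw [inv_mul_le_iff₀ ht]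
    exact h3.trans h4
  have hi : IntegrableOn (fun t : ℝ => |d - c| * (Real.exp (-c*t) + Real.exp (-d*t))) (Ioi 0) :=
    ((integrableOn_exp_mul_Ioi (by linarith) 0).add (integrableOn_exp_mul_Ioi (by linarith) 0)).const_mul _
  refine hi.mono' ?_ ?_
  · exact (by fun_prop : Measurable fun t : ℝ => t⁻¹ * (Real.exp (-c*t) - Real.exp (-d*t))).aestronglyMeasurable
  · filter_upwards [ae_restrict_mem measurableSet_Ioi] with t ht
    rw [Real.norm_eq_abs, abs_le]
    refine ⟨?_, key c d t ht⟩
    have := key d c t ht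
    rw [abs_sub_comm] at this
    linarith

lemma frull {c d : ℝ} (hc : 0 < c) (hd : 0 < d) :
    ∫ t in Ioi (0:ℝ), t⁻¹ * (Real.exp (-c*t) - Real.exp (-d*t)) = Real.log (d / c) := by
  have h := Frullani.integral_Ioi_eq (f := fun y : ℝ => Real.exp (-y)) (a := c) (b := d) (L := 1) (R := 0)
    ((by fun_prop : Continuous fun y : ℝ => Real.exp (-y)).locallyIntegrable.locallyIntegrableOn _) hc hd
    ?_ ?_ ?_
  · simpa [neg_mul] using h
  · have : Tendsto (fun y : ℝ => Real.exp (-y)) (nhds 0) (nhds (Real.exp (-0))) :=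
      (by fun_prop : Continuous fun y : ℝ => Real.exp (-y)).tendsto 0
    simp only [neg_zero, Real.exp_zero] at this
    exact this.mono_left nhdsWithin_le_nhds
  · exact Real.tendsto_exp_neg_atTop_nhds_zero
  · simpa [neg_mul] using frull_int hc hd

lemma ww_key (ν t : ℝ) : ww (1-ν) t * (1 - Real.exp (-4*t)) =
    1 - Real.exp (-ν*t) - Real.exp (-(2-ν)*t) + Real.exp (-(2+ν)*t) + Real.exp (-(4-ν)*t) - Real.exp (-4*t) := by
  unfold ww
  have hc : Real.cosh t ≠ 0 := (Real.cosh_pos t).ne'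
  rw [Real.cosh_eq ((1-ν)*t)] at *
  have e1 : Real.exp (-4*t) = Real.exp (-t)^4 := by rw [← Real.exp_nat_mul]; push_cast; ring_nf
  have e2 : Real.exp (-(2-ν)*t) = Real.exp (-t)^2 * Real.exp (ν*t) := by
    rw [← Real.exp_nat_mul, ← Real.exp_add]; push_cast; ring_nf
  have e3 : Real.exp (-(2+ν)*t) = Real.exp (-t)^2 * Real.exp (-(ν*t)) := by
    rw [← Real.exp_nat_mul, ← Real.exp_add]; push_cast; ring_nf
  have e4 : Real.exp (-(4-ν)*t) = Real.exp (-t)^4 * Real.exp (ν*t) := by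
    rw [← Real.exp_nat_mul, ← Real.exp_add]; push_cast; ring_nf
  have e5 : Real.exp ((1-ν)*t) = Real.exp t * Real.exp (-(ν*t)) := by rw [← Real.exp_add]; ring_nf
  have e6 : Real.exp (-((1-ν)*t)) = Real.exp (-t) * Real.exp (ν*t) := by rw [← Real.exp_add]; ring_nf
  have e7 : Real.exp (-ν*t) = Real.exp (-(ν*t)) := by rw [neg_mul]
  have e8 : Real.exp t * Real.exp (-t) = 1 := by rw [← Real.exp_add]; simp
  have e9 : Real.exp (ν*t) * Real.exp (-(ν*t)) = 1 := by rw [← Real.exp_add]; simp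
  have hc' : Real.exp t + Real.exp (-t) ≠ 0 := by positivity
  rw [e1,e2,e3,e4,e5,e6,e7, Real.cosh_eq]
  rw [show Real.exp (-(ν*t)) = (Real.exp (ν*t))⁻¹ from Real.exp_neg _, Real.exp_neg t]
  have := (Real.exp_pos t).ne'
  have := (Real.exp_pos (ν*t)).ne'
  generalize Real.exp t = E at *
  generalize Real.exp (ν*t) = V at *
  have h2 : E^2+1 ≠ 0 := by positivity
  field_simp
  ring

noncomputable def tj (ν y : ℝ) : ℝ := ((y+ν)/y) * ((y+2-ν)/(y+2+ν)) * ((y+4)/(y+4-ν))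

lemma lap_diff {ν : ℝ} (h0 : 0 ≤ ν) (h1 : ν ≤ 1) {x : ℝ} (hx : 0 < x) :
    LaplaceTransform (ppf (1-ν)) x - LaplaceTransform (ppf (1-ν)) (x+4) = Real.log (tj ν x) := by
  have ha : 0 ≤ 1 - ν := by linarith
  have ha1 : 1 - ν ≤ 1 := by linarith
  unfold LaplaceTransform
  rw [← integral_sub (lapok_ppf ha ha1 x hx) (lapok_ppf ha ha1 (x+4) (by linarith))]
  unfold tj
  have p1 : 0 < x + ν := by linarith
  have p2 : 0 < x + 2 - ν := by linarith
  have p3 : 0 < x + 2 + ν := by linarith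
  have p4 : 0 < x + 4 := by linarith
  have p5 : 0 < x + 4 - ν := by linarith
  rw [Real.log_mul (by positivity) (by positivity), Real.log_mul (by positivity) (by positivity)]
  rw [← frull hx p1, ← frull p3 p2, ← frull p5 p4]
  rw [← integral_add (frull_int hx p1) (frull_int p3 p2), ← integral_add _ (frull_int p5 p4)]
  · refine setIntegral_congr_fun measurableSet_Ioi fun t ht => ?_
    have ht' : t ≠ 0 := ne_of_gt ht
    have k := ww_key ν t
    simp only [ppf]
    have e : ∀ z, Real.exp (-x*t) * Real.exp (-z*t) = Real.exp (-(x+z)*t) := fun z => by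
      rw [← Real.exp_add]; ring_nf
    have e4 := e 4
    have e1 := e ν
    have e2 := e (2-ν)
    have e3 := e (2+ν)
    have e5 := e (4-ν)
    rw [show x + 2 - ν = x + (2-ν) by ring, show x + 2 + ν = x + (2+ν) by ring,
      show x + 4 - ν = x + (4-ν) by ring, ← e1, ← e2, ← e3, ← e4, ← e5]
    rw [one_div]
    linear_combination (t⁻¹ * Real.exp (-x*t)) * k
  · exact (frull_int hx p1).add (frull_int p3 p2)

lemma lap_sum {ν : ℝ} (h0 : 0 ≤ ν) (h1 : ν ≤ 1) {x : ℝ} (hx : 0 < x) (N : ℕ) :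
    LaplaceTransform (ppf (1-ν)) x - LaplaceTransform (ppf (1-ν)) (x+4*N) =
      Real.log (∏ j ∈ Finset.range N, tj ν (x + 4 * j)) := by
  rw [Real.log_prod]
  · induction N with
    | zero => simp
    | succ N ih =>
      rw [Finset.sum_range_succ, ← ih, ← lap_diff h0 h1 (by positivity)]
      push_cast
      ring_nf
  · intro j _
    have p0 : 0 < x + 4 * j := by positivity
    unfold tj
    generalize x + 4 * (j:ℝ) = y at *
    have p1 : 0 < y + ν := by linarith
    have p2 : 0 < y + 2 - ν := by linarith
    have p3 : 0 < y + 2 + ν := by linarith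
    have p4 : 0 < y + 4 := by linarith
    have p5 : 0 < y + 4 - ν := by linarith
    positivity

lemma lap_ppf_top {a : ℝ} (ha : 0 ≤ a) (ha1 : a ≤ 1) : Tendsto (LaplaceTransform (ppf a)) atTop (nhds 0) := by
  have hz : Tendsto (fun x : ℝ => 0.386 * x⁻¹) atTop (nhds 0) := by
    simpa using tendsto_inv_atTop_zero.const_mul (0.386:ℝ)
  refine tendsto_of_tendsto_of_tendsto_of_le_of_le' tendsto_const_nhds hz ?_ ?_
  · filter_upwards with x
    exact setIntegral_nonneg measurableSet_Ioi fun t ht => mul_nonneg (Real.exp_pos _).le (ppf_nonneg ha ha1 (le_of_lt ht))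
  · filter_upwards [eventually_gt_atTop 0] with x hx
    have h := lap_one hx
    rw [← one_div, ← h]
    unfold LaplaceTransform
    rw [← integral_const_mul]
    refine setIntegral_mono_on (lapok_ppf ha ha1 x hx) ((lapok_one x hx).const_mul _) measurableSet_Ioi fun t ht => ?_
    have := ppf_le (a := a) (le_of_lt ht)
    have := Real.exp_pos (-x*t)
    nlinarith

lemma tele {y : ℝ} (hy : 0 < y) (N : ℕ) : ∏ j ∈ Finset.range N, ((y + j + 1) / (y + j)) = (y + N) / y := by
  induction N with
  | zero => simp [hy.ne']
  | succ N ih =>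
    rw [Finset.prod_range_succ, ih]
    have : y + N ≠ 0 := by positivity
    push_cast; field_simp; ring

lemma prod_eq {ν : ℝ} (h0 : 0 ≤ ν) (h1 : ν ≤ 1) {x : ℝ} (hx : 0 < x) {N : ℕ} (hN : 0 < N) :
    ∏ j ∈ Finset.range (N+1), tj ν (x + 4 * j) =
      Real.GammaSeq ((x-ν)/4+1) N * Real.GammaSeq ((x+ν)/4+1/2) N /
       (Real.GammaSeq ((x-ν)/4+1/2) N * Real.GammaSeq ((x+ν)/4) N) * ((x/4 + (N+1)) / (x/4) * (N:ℝ)⁻¹) := by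
  have hN' : (0:ℝ) < N := by exact_mod_cast hN
  have e : ∀ j ∈ Finset.range (N+1), tj ν (x + 4 * j) = ((x+ν)/4 + j) * ((x-ν)/4+1/2 + j) /
      (((x+ν)/4+1/2 + j) * ((x-ν)/4+1 + j)) * ((x/4 + j + 1)/(x/4+j)) := fun j _ => by
    unfold tj
    have hj : (0:ℝ) ≤ j := by positivity
    have p0 : x + 4*j ≠ 0 := by positivity
    have p1 : x + 4*j + 2 + ν ≠ 0 := by positivity
    have p2 : x + 4*j + 4 - ν ≠ 0 := by linarith
    have p3 : (x+ν)/4+1/2 + j ≠ 0 := by positivity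
    have p4 : (x-ν)/4+1 + j ≠ 0 := by linarith
    have p5 : x/4 + j ≠ 0 := by positivity
    have q1 : (x+ν)/4+1/2 + j = (x + 4*j + 2 + ν)/4 := by ring
    have q2 : (x-ν)/4+1 + j = (x + 4*j + 4 - ν)/4 := by ring
    have q3 : x/4 + j = (x + 4*j)/4 := by ring
    rw [q1,q2,q3]
    field_simp
    ring
  rw [Finset.prod_congr rfl e, Finset.prod_mul_distrib, tele (by positivity), Finset.prod_div_distrib,
    Finset.prod_mul_distrib, Finset.prod_mul_distrib]
  unfold Real.GammaSeq
  have hpos : ∀ s : ℝ, 0 < s → ∏ j ∈ Finset.range (N+1), (s + j) ≠ 0 := fun s hs =>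
    Finset.prod_ne_zero_iff.2 fun j _ => by positivity
  have z1 := hpos ((x+ν)/4) (by linarith)
  have z2 := hpos ((x-ν)/4+1/2) (by linarith)
  have z3 := hpos ((x+ν)/4+1/2) (by linarith)
  have z4 := hpos ((x-ν)/4+1) (by linarith)
  have r1 : (N:ℝ)^((x+ν)/4+1/2) = (N:ℝ)^((x+ν)/4) * (N:ℝ)^(1/2:ℝ) := Real.rpow_add hN' _ _
  have r2 : (N:ℝ)^((x-ν)/4+1) = (N:ℝ)^((x-ν)/4+1/2) * (N:ℝ)^(1/2:ℝ) := by
    rw [← Real.rpow_add hN']; ring_nf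
  have r3 : (N:ℝ)^(1/2:ℝ) * (N:ℝ)^(1/2:ℝ) = N := by rw [← Real.rpow_add hN']; norm_num
  rw [r1, r2]
  have w1 : (N:ℝ)^((x+ν)/4) ≠ 0 := (Real.rpow_pos_of_pos hN' _).ne'
  have w2 : (N:ℝ)^((x-ν)/4+1/2) ≠ 0 := (Real.rpow_pos_of_pos hN' _).ne'
  have hf : (N.factorial : ℝ) ≠ 0 := by positivity
  generalize (N:ℝ)^((x+ν)/4) = A1 at *
  generalize (N:ℝ)^((x-ν)/4+1/2) = A2 at *
  generalize (N:ℝ)^(1/2:ℝ) = H at *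
  generalize ∏ j ∈ Finset.range (N+1), ((x+ν)/4 + (j:ℝ)) = P1 at *
  generalize ∏ j ∈ Finset.range (N+1), ((x-ν)/4+1/2 + (j:ℝ)) = P2 at *
  generalize ∏ j ∈ Finset.range (N+1), ((x+ν)/4+1/2 + (j:ℝ)) = P3 at *
  generalize ∏ j ∈ Finset.range (N+1), ((x-ν)/4+1 + (j:ℝ)) = P4 at *
  push_cast
  have hNe := hN'.ne'
  field_simp
  rw [sq, r3]

lemma lap_ppf {ν : ℝ} (h0 : 0 ≤ ν) (h1 : ν ≤ 1) {x : ℝ} (hx : 0 < x) :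
    LaplaceTransform (ppf (1-ν)) x = Real.log
            (4 * Real.Gamma ((x - ν) / 4 + 1) * Real.Gamma ((x + ν) / 4 + 1 / 2) /
              (x * Real.Gamma ((x - ν) / 4 + 1 / 2) * Real.Gamma ((x + ν) / 4))) := by
  have g1 := Real.Gamma_pos_of_pos (s := (x-ν)/4+1) (by linarith)
  have g2 := Real.Gamma_pos_of_pos (s := (x+ν)/4+1/2) (by linarith)
  have g3 := Real.Gamma_pos_of_pos (s := (x-ν)/4+1/2) (by linarith)
  have g4 := Real.Gamma_pos_of_pos (s := (x+ν)/4) (by linarith)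
  have t1 : Tendsto (fun N : ℕ => (x/4 + ((N:ℝ)+1)) / (x/4) * (N:ℝ)⁻¹) atTop (nhds (4/x)) := by
    have hi : Tendsto (fun N : ℕ => ((N:ℝ))⁻¹) atTop (nhds 0) := tendsto_inv_atTop_nhds_zero_nat
    have := (hi.const_mul ((x/4+1)/(x/4))).add_const (4/x)
    rw [mul_zero, zero_add] at this
    refine this.congr' ?_
    filter_upwards [eventually_gt_atTop 0] with N hN
    have : (N:ℝ) ≠ 0 := by positivity
    field_simp
    ring
  have t2 := (((Real.GammaSeq_tendsto_Gamma ((x-ν)/4+1)).mul (Real.GammaSeq_tendsto_Gamma ((x+ν)/4+1/2))).div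
    ((Real.GammaSeq_tendsto_Gamma ((x-ν)/4+1/2)).mul (Real.GammaSeq_tendsto_Gamma ((x+ν)/4))) (by positivity)).mul t1
  have t3 := t2.log (by positivity)
  have t4 : Tendsto (fun N : ℕ => LaplaceTransform (ppf (1-ν)) x - LaplaceTransform (ppf (1-ν)) (x+4*((N+1:ℕ):ℝ)))
      atTop (nhds (LaplaceTransform (ppf (1-ν)) x - 0)) := by
    refine tendsto_const_nhds.sub ((lap_ppf_top (a := 1-ν) (by linarith) (by linarith)).comp ?_)
    refine tendsto_atTop_add_const_left _ _ (Tendsto.const_mul_atTop (by norm_num) ?_)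
    exact (tendsto_natCast_atTop_atTop).comp (tendsto_add_atTop_nat 1)
  have t5 := tendsto_nhds_unique (t4.congr' ?_) t3
  · rw [sub_zero] at t5
    rw [t5]
    congr 1
    field_simp
  · filter_upwards [eventually_gt_atTop 0] with N hN
    rw [lap_sum h0 h1 hx (N+1), prod_eq h0 h1 hx hN]
    rfl

noncomputable def mz (ν s : ℝ) : ℝ :=
  max s 0 - max (s-ν) 0 - max (s-(2-ν)) 0 + max (s-(2+ν)) 0 + max (s-(4-ν)) 0 - max (s-4) 0

noncomputable def mper (ν s : ℝ) : ℝ := mz ν (4 * Int.fract (s/4))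

lemma mz_bd {ν : ℝ} (h0 : 0 ≤ ν) (h1 : ν ≤ 1) (s : ℝ) : |mz ν s| ≤ 1 := by
  unfold mz
  rw [abs_le]
  rcases le_total s 0 with a1 | a1 <;> rcases le_total (s-ν) 0 with a2 | a2 <;>
  rcases le_total (s-(2-ν)) 0 with a3 | a3 <;> rcases le_total (s-(2+ν)) 0 with a4 | a4 <;>
  rcases le_total (s-(4-ν)) 0 with a5 | a5 <;> rcases le_total (s-4) 0 with a6 | a6 <;>
  simp only [a1, a2, a3, a4, a5, a6, max_eq_left, max_eq_right] <;> constructor <;> linarith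

lemma mz_big {ν : ℝ} (h0 : 0 ≤ ν) (h1 : ν ≤ 1) {s : ℝ} (hs : 4 ≤ s) : mz ν s = 0 := by
  unfold mz
  rw [max_eq_left (by linarith), max_eq_left (by linarith), max_eq_left (by linarith),
    max_eq_left (by linarith), max_eq_left (by linarith), max_eq_left (by linarith)]
  ring

lemma mz_zero {ν : ℝ} (h0 : 0 ≤ ν) (h1 : ν ≤ 1) : mz ν 0 = 0 := by
  unfold mz
  rw [max_eq_right (by linarith), max_eq_right (by linarith), max_eq_right (by linarith),
    max_eq_right (by linarith), max_eq_right (by linarith), max_eq_right (by linarith)]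
  ring

lemma mper_meas (ν : ℝ) : Measurable (mper ν) := by
  unfold mper mz
  have : Measurable fun s : ℝ => Int.fract (s/4) := measurable_fract.comp (measurable_id.div_const 4)
  fun_prop

lemma mper_bd {ν : ℝ} (h0 : 0 ≤ ν) (h1 : ν ≤ 1) (s : ℝ) : |mper ν s| ≤ 1 := mz_bd h0 h1 _

lemma mper_add (ν s : ℝ) : mper ν (s+4) = mper ν s := by
  unfold mper
  rw [show (s+4)/4 = s/4 + 1 by ring, Int.fract_add_one]

lemma mper_small {ν s : ℝ} (hs : 0 ≤ s) (hs4 : s < 4) : mper ν s = mz ν s := by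
  unfold mper
  rw [Int.fract_eq_self.2 ⟨by positivity, by linarith⟩]
  congr 1; ring

lemma lap_id {t : ℝ} (ht : 0 < t) : LaplaceTransform (fun s => s) t = 1 / t^2 := by
  have h1 := lapok_one.hasDerivAt ht
  have h2 : HasDerivAt (fun x : ℝ => 1 / x) (-(1/t^2)) t := by
    simpa using hasDerivAt_inv ht.ne'
  have he : LaplaceTransform (fun _ => 1) =ᶠ[nhds t] fun x => 1/x := by
    filter_upwards [Ioi_mem_nhds ht] with y hy using lap_one hy
  have := h1.unique (h2.congr_of_eventuallyEq he)
  simp only [mul_one] at this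
  linarith

lemma ramp_full {t : ℝ} (ht : 0 < t) {α : ℝ} (hα : 0 ≤ α) :
    IntegrableOn (fun s => Real.exp (-t*s) * max (s-α) 0) (Ioi 0) ∧
    ∫ s in Ioi (0:ℝ), Real.exp (-t*s) * max (s-α) 0 = Real.exp (-α*t) * (1/t^2) := by
  have hi : Integrable (fun s => Real.exp (-t*s) * max s 0) := by
    have h1 := (lapok_one.mul_t t ht)
    refine (integrableOn_iff_integrable_of_support_subset (s := Ioi 0) ?_).1 (h1.congr_fun (fun s hs => ?_) measurableSet_Ioi)
    · intro s hs
      by_contra hcon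
      have hcon' : s ≤ 0 := by simpa using hcon
      exact hs (by simp [max_eq_right hcon'])
    · have hs' : 0 < s := hs
      simp only [max_eq_left hs'.le, mul_one]
  have hv : ∫ s, Real.exp (-t*s) * max s 0 = 1/t^2 := by
    rw [← lap_id ht]
    unfold LaplaceTransform
    rw [← integral_indicator measurableSet_Ioi]
    congr 1; ext s
    by_cases hs : 0 < s
    · rw [indicator_of_mem (by exact hs), max_eq_left hs.le]
    · rw [indicator_of_notMem (by simpa using hs), max_eq_right (not_lt.1 hs), mul_zero]
  have e : (fun s => Real.exp (-t*s) * max (s-α) 0) =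
      fun s => Real.exp (-α*t) * (fun s => Real.exp (-t*s) * max s 0) (s-α) := by
    ext s
    simp only [← mul_assoc, ← Real.exp_add]
    ring_nf
  have hi2 : Integrable (fun s => Real.exp (-t*s) * max (s-α) 0) := by
    rw [e]
    exact (hi.comp_sub_right α).const_mul _
  refine ⟨hi2.integrableOn, ?_⟩
  rw [setIntegral_eq_integral_of_forall_compl_eq_zero, e, integral_const_mul,
    integral_sub_right_eq_self (fun s => Real.exp (-t*s) * max s 0) α, hv]
  intro s hs
  have : s ≤ 0 := by simpa using hs
  rw [max_eq_right (by linarith), mul_zero]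

lemma lap_mz {ν : ℝ} (h0 : 0 ≤ ν) (h1 : ν ≤ 1) {t : ℝ} (ht : 0 < t) :
    LaplaceTransform (mz ν) t = ww (1-ν) t * (1 - Real.exp (-4*t)) * (1/t^2) := by
  rw [ww_key]
  obtain ⟨i1, v1⟩ := ramp_full ht (α := 0) le_rfl
  obtain ⟨i2, v2⟩ := ramp_full ht (α := ν) h0
  obtain ⟨i3, v3⟩ := ramp_full ht (α := 2-ν) (by linarith)
  obtain ⟨i4, v4⟩ := ramp_full ht (α := 2+ν) (by linarith)
  obtain ⟨i5, v5⟩ := ramp_full ht (α := 4-ν) (by linarith)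
  obtain ⟨i6, v6⟩ := ramp_full ht (α := 4) (by linarith)
  simp only [sub_zero, neg_zero, zero_mul, Real.exp_zero] at i1 v1
  unfold LaplaceTransform mz
  simp only [mul_sub, mul_add]
  rw [integral_sub, integral_add, integral_add, integral_sub, integral_sub, v1, v2, v3, v4, v5, v6]
  · ring
  · exact i1
  · exact i2
  · exact i1.sub i2
  · exact i3
  · exact (i1.sub i2).sub i3
  · exact i4
  · exact ((i1.sub i2).sub i3).add i4
  · exact i5
  · exact (((i1.sub i2).sub i3).add i4).add i5
  · exact i6

lemma lapok_mper {ν : ℝ} (h0 : 0 ≤ ν) (h1 : ν ≤ 1) : LapOK (mper ν) :=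
  LapOK.of_bdd (mper_meas ν).aestronglyMeasurable fun s _ => mper_bd h0 h1 s

lemma lap_mper {ν : ℝ} (h0 : 0 ≤ ν) (h1 : ν ≤ 1) {t : ℝ} (ht : 0 < t) :
    LaplaceTransform (mper ν) t = ww (1-ν) t * (1/t^2) := by
  have hi := lapok_mper h0 h1 t ht
  have hshift : Real.exp (-4*t) * LaplaceTransform (mper ν) t = ∫ s in Ioi (4:ℝ), Real.exp (-t*s) * mper ν s := by
    unfold LaplaceTransform
    rw [← integral_const_mul, ← integral_indicator measurableSet_Ioi, ← integral_indicator measurableSet_Ioi,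
      ← integral_add_right_eq_self ((Ioi (4:ℝ)).indicator fun s => Real.exp (-t*s) * mper ν s) 4]
    congr 1; ext s
    by_cases hs : 0 < s
    · rw [indicator_of_mem (by exact hs), indicator_of_mem (by simpa using hs), mper_add, ← mul_assoc, ← Real.exp_add]
      ring_nf
    · rw [indicator_of_notMem (by simpa using hs), indicator_of_notMem (by simpa using hs)]
  have hmz := lap_mz h0 h1 ht
  have hsub : LaplaceTransform (mz ν) t = LaplaceTransform (mper ν) t - ∫ s in Ioi (4:ℝ), Real.exp (-t*s) * mper ν s := by
    unfold LaplaceTransform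
    have hi4 : IntegrableOn (fun s => Real.exp (-t*s) * mper ν s) (Ioi 4) :=
      hi.mono_set (Ioi_subset_Ioi (by norm_num))
    rw [← integral_indicator measurableSet_Ioi, ← integral_indicator measurableSet_Ioi, ← integral_indicator measurableSet_Ioi,
      ← integral_sub (hi.integrable_indicator measurableSet_Ioi) (hi4.integrable_indicator measurableSet_Ioi)]
    congr 1; ext s
    by_cases hs : 0 < s
    · rw [indicator_of_mem (by exact hs), indicator_of_mem (by exact hs)]
      by_cases hs4 : 4 < s
      · rw [indicator_of_mem (by exact hs4), mz_big h0 h1 hs4.le]; ring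
      · rw [indicator_of_notMem (by simpa using hs4)]
        rcases (not_lt.1 hs4).lt_or_eq with h | h
        · rw [mper_small hs.le h]; ring
        · have := mper_add ν 0
          rw [zero_add, mper_small le_rfl (by norm_num), mz_zero h0 h1] at this
          rw [h, mz_big h0 h1 le_rfl, this]; ring
    · rw [indicator_of_notMem (by simpa using hs), indicator_of_notMem (by simpa using hs),
        indicator_of_notMem (by simp; linarith)]
      ring
  rw [hmz, ← hshift] at hsub
  have hne : 1 - Real.exp (-4*t) ≠ 0 := by
    have : Real.exp (-4*t) < 1 := by
      rw [← Real.exp_zero]; exact Real.exp_lt_exp.2 (by linarith)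
    linarith
  apply mul_right_cancel₀ hne
  linear_combination -hsub

lemma fub {d : ℝ → ℝ} (hdm : Measurable d) (hd0 : ∀ s, 0 ≤ d s) (hok : LapOK d)
    (hok2 : LapOK (fun t => t * LaplaceTransform d t)) {x : ℝ} (hx : 0 < x) :
    IntegrableOn (fun s => d s * (1/(x+s)^2)) (Ioi 0) ∧
    LaplaceTransform (fun t => t * LaplaceTransform d t) x = ∫ s in Ioi 0, d s * (1/(x+s)^2) := by
  set μ := volume.restrict (Ioi (0:ℝ)) with hμ
  set F : ℝ → ℝ → ℝ := fun t s => Real.exp (-x*t) * (t * (Real.exp (-t*s) * d s)) with hF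
  have hFm : Measurable (Function.uncurry F) := by
    have : Measurable fun p : ℝ × ℝ => d p.2 := hdm.comp measurable_snd
    simp only [hF, Function.uncurry_def]
    fun_prop
  have hin : ∀ t, ∫ s, F t s ∂μ = Real.exp (-x*t) * (t * LaplaceTransform d t) := fun t => by
    simp only [hF]; rw [integral_const_mul, integral_const_mul]; rfl
  have hFint : Integrable (Function.uncurry F) (μ.prod μ) := by
    rw [integrable_prod_iff hFm.aestronglyMeasurable]
    constructor
    · filter_upwards [ae_restrict_mem measurableSet_Ioi] with t ht
      exact ((hok t ht).const_mul t).const_mul (Real.exp (-x*t))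
    · refine (hok2 x hx).congr ?_
      filter_upwards [ae_restrict_mem measurableSet_Ioi] with t ht
      rw [← hin]
      congr 1; ext s
      have := hd0 s
      have ht' : 0 < t := ht
      simp only [Function.uncurry_apply_pair, hF]
      rw [Real.norm_eq_abs, abs_of_nonneg (by positivity)]
  have hout : ∀ s ∈ Ioi (0:ℝ), ∫ t, F t s ∂μ = d s * (1/(x+s)^2) := fun s hs => by
    have hs' : 0 < s := hs
    rw [← lap_id (add_pos hx hs')]
    unfold LaplaceTransform
    rw [← integral_const_mul]
    congr 1; ext t
    have : Real.exp (-(x+s)*t) = Real.exp (-x*t) * Real.exp (-t*s) := by rw [← Real.exp_add]; ring_nf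
    rw [this]; simp only [hF]; ring
  constructor
  · refine hFint.swap.integral_prod_left.congr ?_
    filter_upwards [ae_restrict_mem measurableSet_Ioi] with s hs
    exact hout s hs
  · unfold LaplaceTransform
    have h := integral_integral_swap hFint
    simp only [hin] at h
    rw [← setIntegral_congr_fun measurableSet_Ioi hout]
    exact h

lemma stieltjes_tau {ν : ℝ} (h0 : 0 ≤ ν) (h1 : ν ≤ 1) {ε : ℝ} (hε : |ε| = 1) :
    IsGenStieltjes 2 (LaplaceTransform (fun t => 1 + ε * ppf (1-ν) t)) := by
  have ha : 0 ≤ 1 - ν := by linarith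
  have ha1 : 1 - ν ≤ 1 := by linarith
  set d : ℝ → ℝ := fun s => 1 + ε * mper ν s with hd
  have hdm : Measurable d := measurable_const.add ((mper_meas ν).const_mul ε)
  have hb : ∀ s, |ε * mper ν s| ≤ 1 := fun s => by rw [abs_mul, hε, one_mul]; exact mper_bd h0 h1 s
  have hd0 : ∀ s, 0 ≤ d s := fun s => by linarith [(abs_le.1 (hb s)).1]
  have hok : LapOK d := LapOK.of_bdd (C := 2) hdm.aestronglyMeasurable fun s _ => by
    rw [abs_of_nonneg (hd0 s)]; linarith [(abs_le.1 (hb s)).2]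
  have hLd : ∀ t, 0 < t → t * LaplaceTransform d t = 1 + ε * ppf (1-ν) t := fun t ht => by
    have : LaplaceTransform d t = 1/t + ε * LaplaceTransform (mper ν) t := by
      rw [← lap_one ht]
      unfold LaplaceTransform
      rw [← integral_const_mul, ← integral_add (lapok_one t ht) ((lapok_mper h0 h1 t ht).const_mul ε)]
      congr 1; ext s; simp only [hd]; ring
    rw [this, lap_mper h0 h1 ht, ppf]
    field_simp
  have hok2 : LapOK (fun t => t * LaplaceTransform d t) := fun x hx =>
    (lapok_tau ha ha1 ε x hx).congr_fun (fun t ht => by simp only [hLd t ht]) measurableSet_Ioi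
  refine ⟨(volume.restrict (Ioi 0)).withDensity (fun s => ((d s).toNNReal : ENNReal)), 0, le_rfl, ?_, fun x hx => ?_⟩
  · apply withDensity_absolutelyContinuous
    rw [Measure.restrict_apply measurableSet_Iio]
    have : Iio (0:ℝ) ∩ Ioi 0 = ∅ := by
      ext s; simp only [mem_inter_iff, mem_Iio, mem_Ioi, mem_empty_iff_false, iff_false]; rintro ⟨a, b⟩; linarith
    rw [this, measure_empty]
  · obtain ⟨hi, hv⟩ := fub hdm hd0 hok hok2 hx
    have e : ∀ s ∈ Ioi (0:ℝ), d s * (1/(x+s)^2) = (d s).toNNReal • (x+s)^(-2:ℝ) := fun s hs => by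
      have hs' : 0 < s := hs
      rw [NNReal.smul_def, Real.coe_toNNReal _ (hd0 s), smul_eq_mul, Real.rpow_neg (by positivity)]
      norm_num
    constructor
    · rw [integrable_withDensity_iff_integrable_smul hdm.real_toNNReal]
      exact hi.congr_fun e measurableSet_Ioi
    · rw [integral_withDensity_eq_integral_smul hdm.real_toNNReal, add_zero,
        ← setIntegral_congr_fun measurableSet_Ioi e, ← hv]
      exact setIntegral_congr_fun measurableSet_Ioi fun t ht => by simp only [hLd t ht]

/-- Theorem: for `0 ≤ ν ≤ 1` and either sign `ε = ±1`, the function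
`τ(x) = 1 ± (1/x)(1 - cosh((1-ν)x)/cosh x)` has Laplace transform a generalized Stieltjes
function of order 2 (hence `τ` is infinitely divisible), and
`L(τ)(x) = 1/x ± log(4Γ((x-ν)/4+1)Γ((x+ν)/4+1/2)/(xΓ((x-ν)/4+1/2)Γ((x+ν)/4)))`. -/
theorem stmt12 (ν : ℝ) (hν0 : 0 ≤ ν) (hν1 : ν ≤ 1) (ε : ℝ) (hε : ε = 1 ∨ ε = -1) :
    IsGenStieltjes 2 (LaplaceTransform
      (fun x => 1 + ε * ((1 / x) * (1 - Real.cosh ((1 - ν) * x) / Real.cosh x)))) ∧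
    LogCompletelyMonotonic (LaplaceTransform
      (fun x => 1 + ε * ((1 / x) * (1 - Real.cosh ((1 - ν) * x) / Real.cosh x)))) ∧
    ∀ x : ℝ, 0 < x →
      LaplaceTransform
          (fun x => 1 + ε * ((1 / x) * (1 - Real.cosh ((1 - ν) * x) / Real.cosh x))) x
        = 1 / x + ε * Real.log
            (4 * Real.Gamma ((x - ν) / 4 + 1) * Real.Gamma ((x + ν) / 4 + 1 / 2) /
              (x * Real.Gamma ((x - ν) / 4 + 1 / 2) * Real.Gamma ((x + ν) / 4))) := by
  have hε' : |ε| = 1 := by rcases hε with h | h <;> simp [h]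
  refine ⟨stieltjes_tau hν0 hν1 hε', logcm_tau (by linarith) (by linarith) hε', fun x hx => ?_⟩
  rw [← lap_ppf hν0 hν1 hx]
  exact lap_tau (by linarith) (by linarith) ε hx
end

section
/- Let {a_n}_{n≥1} be reals with 0 < a_1 ≤ a_2 ≤ … and Σ_{n=1}^∞ 1/a_n² < ∞, and let f be the entire function f(z) = e^{αz+β} Π_{n=1}^∞ (1 + z/a_n) e^{-z/a_n} (an entire function of genus 1 with only negative zeros and f(0) > 0). Let a, b > 0 and c = a + b. Then the function x ↦ log( f(x+a) f(x+b) / ( f(x) f(x+c) ) ) on (0,∞) is a generalized Stieltjes function of order 2, with representing measure having density (χ_{(0,a)} * χ_{(0,b)} * μ)(t) where μ = Σ_{n=1}^∞ ε_{a_n} is the sum of unit point masses at the a_n; that is, log( f(x+a) f(x+b) / ( f(x) f(x+c) ) ) = ∫_0^∞ (χ_{(0,a)} * χ_{(0,b)} * μ)(t) (x+t)^{-2} dt for all x > 0. -/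
open MeasureTheory Filter Set

/-- The convolution `(χ_{(0,a)} * χ_{(0,b)})(t)` of indicator functions of intervals. -/
noncomputable def indConv (a b t : ℝ) : ℝ :=
  ∫ s : ℝ, (Set.Ioo (0:ℝ) a).indicator (fun _ => (1:ℝ)) s *
    (Set.Ioo (0:ℝ) b).indicator (fun _ => (1:ℝ)) (t - s)

lemma aux_ftc (F g : ℝ → ℝ) (q : ℝ) (hq : 0 < q)
    (hF : ∀ u ∈ Set.Icc 0 q, HasDerivAt F (g u) u)
    (hc : ContinuousOn g (Set.Icc 0 q)) (hg : ∀ u ∈ Set.Icc 0 q, 0 ≤ g u) :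
    ∫⁻ u in Set.Ioo 0 q, ENNReal.ofReal (g u) = ENNReal.ofReal (F q - F 0) := by
  have hi : IntegrableOn g (Set.Ioo 0 q) :=
    (hc.integrableOn_compact isCompact_Icc).mono_set Set.Ioo_subset_Icc_self
  rw [← ofReal_integral_eq_lintegral_ofReal hi]
  · congr 1
    rw [← integral_Ioc_eq_integral_Ioo, ← intervalIntegral.integral_of_le hq.le]
    apply intervalIntegral.integral_eq_sub_of_hasDerivAt
    · intro u hu
      rw [Set.uIcc_of_le hq.le] at hu
      exact hF u hu
    · apply ContinuousOn.intervalIntegrable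
      rwa [Set.uIcc_of_le hq.le]
  · filter_upwards [ae_restrict_mem measurableSet_Ioo] with u hu
    exact hg u (Set.Ioo_subset_Icc_self hu)

lemma aux_inner (y q : ℝ) (hy : 0 < y) (hq : 0 < q) :
    ∫⁻ u in Set.Ioo 0 q, ENNReal.ofReal (1 / (y + u) ^ 2)
      = ENNReal.ofReal (1 / y - 1 / (y + q)) := by
  have hne : ∀ u ∈ Set.Icc 0 q, y + u ≠ 0 := fun u hu => by
    have := hu.1
    positivity
  rw [aux_ftc (fun u => - (y + u)⁻¹) _ q hq]
  · congr 1
    simp only [add_zero, one_div]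
    ring
  · intro u hu
    have := (((hasDerivAt_id u).const_add y).inv (hne u hu)).neg
    have e : (1:ℝ) / (y + u) ^ 2 = -(-1 / (y + id u) ^ 2) := by
      rw [neg_div, neg_neg]
      rfl
    rw [e]
    exact this
  · apply ContinuousOn.div continuousOn_const (by fun_prop)
    intro u hu
    exact pow_ne_zero _ (hne u hu)
  · intro u hu
    positivity

lemma aux_outer (y p q : ℝ) (hy : 0 < y) (hp : 0 < p) (hq : 0 < q) :
    ∫⁻ s in Set.Ioo 0 p, ENNReal.ofReal (1 / (y + s) - 1 / (y + s + q))
      = ENNReal.ofReal (Real.log (y + p) + Real.log (y + q) - Real.log y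
          - Real.log (y + (p + q))) := by
  have hne : ∀ u ∈ Set.Icc 0 p, 0 < y + u := fun u hu => by
    have := hu.1
    positivity
  rw [aux_ftc (fun u => Real.log (y + u) - Real.log (y + u + q)) _ p hp]
  · congr 1
    simp only [add_zero]
    rw [show y + p + q = y + (p + q) by ring]
    ring
  · intro u hu
    have h1 := ((hasDerivAt_id u).const_add y).log (hne u hu).ne'
    have h2 := (((hasDerivAt_id u).const_add y).add_const q).log
      (by have := hne u hu; simp only [id]; positivity)
    exact h1.sub h2
  · apply ContinuousOn.sub
    · exact ContinuousOn.div continuousOn_const (by fun_prop) fun u hu => (hne u hu).ne'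
    · exact ContinuousOn.div continuousOn_const (by fun_prop) fun u hu => by
        have := hne u hu
        positivity
  · intro u hu
    have := hne u hu
    rw [sub_nonneg]
    apply one_div_le_one_div_of_le this
    linarith

lemma indConv_nonneg (p q t : ℝ) : 0 ≤ indConv p q t := by
  unfold indConv
  apply integral_nonneg
  intro s
  apply mul_nonneg <;> exact Set.indicator_nonneg (fun _ _ => zero_le_one) _

lemma indConv_zero (p q t : ℝ) (ht : t ≤ 0) : indConv p q t = 0 := by
  unfold indConv
  apply integral_eq_zero_of_ae
  refine ae_of_all _ fun s => ?_
  simp only [Pi.zero_apply]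
  by_cases h : s ∈ Set.Ioo 0 p
  · rw [Set.indicator_of_notMem (s := Set.Ioo 0 q)]
    · simp
    · intro h'
      linarith [h.1, h'.1]
  · rw [Set.indicator_of_notMem h]
    simp

lemma ofReal_indConv (p q t : ℝ) : ENNReal.ofReal (indConv p q t) =
    ∫⁻ s in Set.Ioo 0 p, (Set.Ioo 0 q).indicator (fun _ => (1 : ENNReal)) (t - s) := by
  unfold indConv
  rw [ofReal_integral_eq_lintegral_ofReal]
  · rw [← lintegral_indicator measurableSet_Ioo]
    congr 1
    ext s
    by_cases h : s ∈ Set.Ioo 0 p <;> by_cases h' : t - s ∈ Set.Ioo 0 q <;>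
      simp [Set.indicator, h, h'] 
  · have hm : Measurable (fun s => (Set.Ioo (0:ℝ) p).indicator (fun _ => (1:ℝ)) s *
        (Set.Ioo (0:ℝ) q).indicator (fun _ => (1:ℝ)) (t - s)) := by
      apply Measurable.mul
      · exact measurable_const.indicator measurableSet_Ioo
      · exact (measurable_const.indicator measurableSet_Ioo).comp (measurable_const.sub measurable_id)
    have hi : Integrable ((Set.Ioo (0:ℝ) p).indicator (fun _ => (1:ℝ))) := by
      rw [integrable_indicator_iff measurableSet_Ioo]
      exact integrableOn_const (by simp)
    refine hi.mono' hm.aestronglyMeasurable (ae_of_all _ fun s => ?_)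
    by_cases h : s ∈ Set.Ioo 0 p <;> by_cases h' : t - s ∈ Set.Ioo 0 q <;>
      simp [Set.indicator, h, h']
  · refine ae_of_all _ fun s => ?_
    apply mul_nonneg <;> exact Set.indicator_nonneg (fun _ _ => zero_le_one) _

lemma meas_aux (q : ℝ) : Measurable (fun z : ℝ × ℝ =>
    (Set.Ioo 0 q).indicator (fun _ => (1 : ENNReal)) (z.1 - z.2)) :=
  (measurable_const.indicator measurableSet_Ioo).comp (measurable_fst.sub measurable_snd)

lemma meas_ofReal_indConv (p q : ℝ) : Measurable (fun t => ENNReal.ofReal (indConv p q t)) := by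
  simp_rw [ofReal_indConv]
  exact (meas_aux q).lintegral_prod_right'

lemma aux_term (x A p q : ℝ) (hx : 0 < x) (hA : 0 < A) (hp : 0 < p) (hq : 0 < q) :
    ∫⁻ t in Set.Ioi 0, ENNReal.ofReal (indConv p q (t - A)) * ENNReal.ofReal (1 / (x + t) ^ 2)
      = ENNReal.ofReal (Real.log (x + A + p) + Real.log (x + A + q) - Real.log (x + A)
          - Real.log (x + A + (p + q))) := by
  rw [← aux_outer (x + A) p q (by positivity) hp hq]
  have hG : Measurable (fun t : ℝ => ENNReal.ofReal (1 / (x + t) ^ 2)) := by fun_prop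
  have hI : ∀ s : ℝ, Measurable (fun t : ℝ =>
      (Set.Ioo 0 q).indicator (fun _ => (1 : ENNReal)) (t - s)) := fun s =>
    (measurable_const.indicator measurableSet_Ioo).comp (measurable_id.sub measurable_const)
  have hJ : ∀ s : ℝ, Measurable (fun t : ℝ =>
      (Set.Ioo 0 q).indicator (fun _ => (1 : ENNReal)) (s - t)) := fun s =>
    (measurable_const.indicator measurableSet_Ioo).comp (measurable_const.sub measurable_id)
  calc _ = ∫⁻ t in Set.Ioi 0, ∫⁻ s in Set.Ioo 0 p,
        (Set.Ioo 0 q).indicator (fun _ => (1 : ENNReal)) (t - A - s)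
          * ENNReal.ofReal (1 / (x + t) ^ 2) := by
        congr 1
        ext t
        rw [ofReal_indConv, lintegral_mul_const _ (hJ _)]
    _ = ∫⁻ s in Set.Ioo 0 p, ∫⁻ t in Set.Ioi 0, 
        (Set.Ioo 0 q).indicator (fun _ => (1 : ENNReal)) (t - A - s)
          * ENNReal.ofReal (1 / (x + t) ^ 2) := by
        apply lintegral_lintegral_swap
        apply Measurable.aemeasurable
        apply Measurable.mul
        · exact (measurable_const.indicator measurableSet_Ioo).comp
            ((measurable_fst.sub measurable_const).sub measurable_snd)
        · exact hG.comp measurable_fst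
    _ = _ := by
        apply setLIntegral_congr_fun measurableSet_Ioo
        intro s hs
        have hs0 := hs.1
        simp only
        rw [← aux_inner (x + A + s) q (by positivity) hq,
          ← lintegral_indicator measurableSet_Ioi, ← lintegral_indicator measurableSet_Ioo,
          ← lintegral_add_right_eq_self _ (A + s)]
        congr 1
        ext u
        by_cases h : u ∈ Set.Ioo 0 q
        · have h' : u + (A + s) ∈ Set.Ioi 0 := by
            have := h.1
            simp only [Set.mem_Ioi]; positivity
          rw [Set.indicator_of_mem h, Set.indicator_of_mem h', show u + (A + s) - A - s = u by ring, Set.indicator_of_mem h,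
            show x + (u + (A + s)) = x + A + s + u by ring, one_mul]
        · rw [Set.indicator_of_notMem h]
          by_cases h' : u + (A + s) ∈ Set.Ioi 0
          · rw [Set.indicator_of_mem h', show u + (A + s) - A - s = u by ring,
              Set.indicator_of_notMem h, zero_mul]
          · rw [Set.indicator_of_notMem h']

lemma log_bound (y : ℝ) (hy : 0 ≤ y) : |Real.log (1 + y) - y| ≤ y ^ 2 := by
  have h1 := Real.log_le_sub_one_of_pos (show 0 < 1 + y by positivity)
  have h2 := Real.one_sub_inv_le_log_of_pos (show 0 < 1 + y by positivity)
  have h3 : y - y ^ 2 ≤ 1 - (1 + y)⁻¹ := by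
    have : 1 - (1 + y)⁻¹ = y / (1 + y) := by field_simp; ring
    rw [this, le_div_iff₀ (by positivity)]
    nlinarith [pow_nonneg hy 3]
  rw [abs_le]
  constructor <;> nlinarith [sq_nonneg y]

theorem stmt14 (a : ℕ → ℝ) (ha : 0 < a 0) (hmono : Monotone a)
    (hsum : Summable (fun n : ℕ => 1 / (a n) ^ 2))
    (α β : ℝ) (f : ℝ → ℝ)
    (hf : ∀ x : ℝ, f x = Real.exp (α * x + β) *
      ∏' n : ℕ, ((1 + x / a n) * Real.exp (-x / a n)))
    (p q : ℝ) (hp : 0 < p) (hq : 0 < q) :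
    IsGenStieltjes 2
      (fun x => Real.log (f (x + p) * f (x + q) / (f x * f (x + (p + q))))) ∧
    ∀ x : ℝ, 0 < x →
      Real.log (f (x + p) * f (x + q) / (f x * f (x + (p + q))))
        = ∫ t in Set.Ioi (0:ℝ), (∑' n : ℕ, indConv p q (t - a n)) / (x + t) ^ 2 := by
  have han : ∀ n, 0 < a n := fun n => ha.trans_le (hmono (Nat.zero_le n))
  -- logarithm of f
  have hLs : ∀ x : ℝ, 0 < x → Summable (fun n => Real.log (1 + x / a n) - x / a n) := by
    intro x hx
    refine Summable.of_norm_bounded (hsum.mul_left (x ^ 2)) fun n => ?_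
    have := log_bound (x / a n) (div_pos hx (han n)).le
    rw [Real.norm_eq_abs]
    convert this using 1
    rw [div_pow]; ring
  have hfe : ∀ x : ℝ, 0 < x → f x = Real.exp (α * x + β +
      ∑' n, (Real.log (1 + x / a n) - x / a n)) := by
    intro x hx
    rw [hf, Real.exp_add (α * x + β)]
    congr 1
    rw [← (hLs x hx).hasSum.rexp.tprod_eq]
    congr 1
    ext n
    have : 0 < 1 + x / a n := by have := han n; positivity
    simp only [Function.comp]
    rw [sub_eq_add_neg, Real.exp_add, Real.exp_log this, neg_div]
  have hfpos : ∀ x : ℝ, 0 < x → 0 < f x := fun x hx => by rw [hfe x hx]; positivity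
  have hlogf : ∀ x : ℝ, 0 < x → Real.log (f x) = α * x + β +
      ∑' n, (Real.log (1 + x / a n) - x / a n) := fun x hx => by rw [hfe x hx, Real.log_exp]
  have hK : ∀ x : ℝ, 0 < x → HasSum (fun n => Real.log (x + a n + p) + Real.log (x + a n + q)
      - Real.log (x + a n) - Real.log (x + a n + (p + q)))
      (Real.log (f (x + p) * f (x + q) / (f x * f (x + (p + q))))) := by
    intro x hx
    have h1 := hfpos x hx
    have h2 := hfpos (x + p) (by positivity)
    have h3 := hfpos (x + q) (by positivity)
    have h4 := hfpos (x + (p + q)) (by positivity)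
    rw [Real.log_div (by positivity) (by positivity), Real.log_mul h2.ne' h3.ne',
      Real.log_mul h1.ne' h4.ne', hlogf x hx, hlogf (x + p) (by positivity),
      hlogf (x + q) (by positivity), hlogf (x + (p + q)) (by positivity)]
    have := ((hLs (x + p) (by positivity)).hasSum.add (hLs (x + q) (by positivity)).hasSum).sub
      ((hLs x hx).hasSum.add (hLs (x + (p + q)) (by positivity)).hasSum)
    convert! this using 1
    · funext n
      have hn := han n
      have key : ∀ y : ℝ, 0 < y → Real.log (1 + y / a n) = Real.log (y + a n) - Real.log (a n) := by
        intro y hy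
        rw [← Real.log_div (by positivity) hn.ne']
        congr 1
        field_simp
        ring
      rw [key x hx, key (x + p) (by positivity), key (x + q) (by positivity),
        key (x + (p + q)) (by positivity)]
      rw [show x + p + a n = x + a n + p by ring, show x + q + a n = x + a n + q by ring,
        show x + (p + q) + a n = x + a n + (p + q) by ring]
      ring
    · ring
  have hKn : ∀ x : ℝ, 0 < x → ∀ n, 0 ≤ Real.log (x + a n + p) + Real.log (x + a n + q)
      - Real.log (x + a n) - Real.log (x + a n + (p + q)) := by
    intro x hx n
    have hn := han n
    rw [sub_sub, sub_nonneg, ← Real.log_mul (by positivity) (by positivity),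
      ← Real.log_mul (by positivity) (by positivity)]
    apply Real.log_le_log (by positivity)
    nlinarith [mul_pos hp hq]
  -- the density
  have hfin : ∀ t : ℝ, Summable (fun n => indConv p q (t - a n)) := by
    intro t
    have h0 := hsum.tendsto_atTop_zero
    have hev : ∀ᶠ n in atTop, t ≤ a n := by
      have hpos : (0:ℝ) < 1 / (|t| + 1) ^ 2 := by positivity
      filter_upwards [h0.eventually (gt_mem_nhds hpos)] with n hn
      have h2 := (one_div_lt_one_div (pow_pos (han n) 2) (by positivity)).1 hn
      have := lt_of_pow_lt_pow_left₀ 2 (han n).le h2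
      linarith [le_abs_self t]
    obtain ⟨N, hN⟩ := eventually_atTop.1 hev
    apply summable_of_ne_finset_zero (s := Finset.range N)
    intro n hn
    rw [Finset.mem_range, not_lt] at hn
    exact indConv_zero _ _ _ (by linarith [hN n hn])
  set D : ℝ → ℝ := fun t => ∑' n, indConv p q (t - a n) with hD
  have hD0 : ∀ t, 0 ≤ D t := fun t => tsum_nonneg fun n => indConv_nonneg _ _ _
  have hDe : ∀ t, ENNReal.ofReal (D t) = ∑' n, ENNReal.ofReal (indConv p q (t - a n)) :=
    fun t => ENNReal.ofReal_tsum_of_nonneg (fun n => indConv_nonneg _ _ _) (hfin t)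
  have hterm_meas : ∀ n, Measurable (fun t => ENNReal.ofReal (indConv p q (t - a n))) := fun n =>
    (meas_ofReal_indConv p q).comp (measurable_id.sub measurable_const)
  have hDem : Measurable (fun t => ENNReal.ofReal (D t)) := by
    simp_rw [hDe]
    exact Measurable.tsum hterm_meas
  have hDm : Measurable D := by
    have := hDem.ennreal_toReal
    simpa only [ENNReal.toReal_ofReal (hD0 _)] using this
  have hGm : ∀ x : ℝ, Measurable (fun t : ℝ => ENNReal.ofReal (1 / (x + t) ^ 2)) := by
    intro x; fun_prop
  have hmain : ∀ x : ℝ, 0 < x → ∫⁻ t in Set.Ioi 0, ENNReal.ofReal (D t / (x + t) ^ 2)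
      = ENNReal.ofReal (Real.log (f (x + p) * f (x + q) / (f x * f (x + (p + q))))) := by
    intro x hx
    rw [← (hK x hx).tsum_eq, ENNReal.ofReal_tsum_of_nonneg (hKn x hx) (hK x hx).summable]
    simp_rw [← fun n => aux_term x (a n) p q hx (han n) hp hq]
    have hm : ∀ n, AEMeasurable (fun t => ENNReal.ofReal (indConv p q (t - a n)) *
        ENNReal.ofReal (1 / (x + t) ^ 2)) (volume.restrict (Set.Ioi 0)) :=
      fun n => ((hterm_meas n).mul (hGm x)).aemeasurable
    rw [← lintegral_tsum hm]
    congr 1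
    ext t
    rw [ENNReal.tsum_mul_right, ← hDe, ← ENNReal.ofReal_mul (hD0 t), mul_one_div]
  have hnn : ∀ x t : ℝ, 0 ≤ D t / (x + t) ^ 2 := fun x t => div_nonneg (hD0 t) (sq_nonneg _)
  have hsm : ∀ x : ℝ, Measurable (fun t => D t / (x + t) ^ 2) := fun x =>
    hDm.div (by fun_prop)
  have hint : ∀ x : ℝ, 0 < x → IntegrableOn (fun t => D t / (x + t) ^ 2) (Set.Ioi 0) := by
    intro x hx
    refine ⟨(hsm x).aestronglyMeasurable, ?_⟩
    rw [hasFiniteIntegral_iff_ofReal (ae_of_all _ (hnn x)), hmain x hx]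
    exact ENNReal.ofReal_lt_top
  have heq : ∀ x : ℝ, 0 < x → 
      Real.log (f (x + p) * f (x + q) / (f x * f (x + (p + q))))
        = ∫ t in Set.Ioi (0:ℝ), D t / (x + t) ^ 2 := by
    intro x hx
    rw [integral_eq_lintegral_of_nonneg_ae (ae_of_all _ (hnn x)) (hsm x).aestronglyMeasurable,
      hmain x hx, ENNReal.toReal_ofReal]
    rw [← (hK x hx).tsum_eq]
    exact tsum_nonneg (hKn x hx)
  refine ⟨⟨(volume.restrict (Set.Ioi 0)).withDensity (fun t => ENNReal.ofReal (D t)), 0, le_rfl,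
    ?_, ?_⟩, heq⟩
  · rw [withDensity_apply _ measurableSet_Iio, Measure.restrict_restrict measurableSet_Iio]
    rw [show Set.Iio (0:ℝ) ∩ Set.Ioi 0 = ∅ by
      ext t; simp only [Set.mem_inter_iff, Set.mem_Iio, Set.mem_Ioi, Set.mem_empty_iff_false]
      constructor
      · rintro ⟨h, h'⟩; linarith
      · exact False.elim]
    simp
  · intro x hx
    have hae : (fun t => (ENNReal.ofReal (D t)).toReal • (x + t) ^ (-2:ℝ))
        =ᵐ[volume.restrict (Set.Ioi 0)] fun t => D t / (x + t) ^ 2 := by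
      filter_upwards [ae_restrict_mem measurableSet_Ioi] with t ht
      have ht' : 0 < t := ht
      rw [ENNReal.toReal_ofReal (hD0 t), Real.rpow_neg (by positivity), smul_eq_mul, div_eq_mul_inv]
      norm_cast
    constructor
    · rw [integrable_withDensity_iff_integrable_smul' hDem (ae_of_all _ fun t => ENNReal.ofReal_lt_top)]
      exact (hint x hx).congr hae.symm
    · rw [integral_withDensity_eq_integral_toReal_smul hDem
        (ae_of_all _ fun t => ENNReal.ofReal_lt_top), integral_congr_ae hae, add_zero]
      exact heq x hx
end

section
/- Let N be a nonnegative integer and 0 < s < 1. Then the function x ↦ Γ(x)/Γ(x+N+s) on (0,∞) is a generalized Stieltjes function of order N+1. -/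
open MeasureTheory Filter Set

lemma aux_coef_nonneg (s : ℝ) (hs1 : s < 1) (k : ℕ) :
    0 ≤ Ring.choose ((1 - s) + (k:ℝ) - 1) k := by
  have h : Ring.choose ((1 - s) + (k:ℝ) - 1) k = Ring.multichoose (1 - s) k := by
    rw [Ring.choose]; congr 1; ring
  rw [h]
  have h2 := Ring.factorial_nsmul_multichoose_eq_ascPochhammer (1 - s) k
  rw [Polynomial.ascPochhammer_smeval_eq_eval] at h2
  have h3 := ascPochhammer_pos k (1 - s) (by linarith)
  rw [← h2, nsmul_eq_mul] at h3
  exact (pos_of_mul_pos_right h3 (by positivity)).le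

lemma aux_series (s : ℝ) (t : ℝ) (ht0 : 0 < t) (ht1 : t < 1) :
    HasSum (fun k : ℕ => Ring.choose ((1 - s) + (k:ℝ) - 1) k * t ^ k) ((1 - t) ^ (s - 1)) := by
  have h := (Real.one_div_one_sub_rpow_hasFPowerSeriesOnBall_zero (1 - s)).hasSum (y := t)
    (by simp [enorm_eq_nnnorm, ← NNReal.coe_lt_coe, abs_of_pos ht0, ht1])
  have e : (1 - t) ^ (s - 1) = 1 / (1 - (0 + t)) ^ (1 - s) := by
    rw [zero_add, one_div, ← Real.rpow_neg (by linarith)]; congr 1; ring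
  rw [e]
  have hf : (fun k : ℕ => Ring.choose ((1 - s) + (k:ℝ) - 1) k * t ^ k) = fun n : ℕ =>
      (FormalMultilinearSeries.ofScalars ℝ (fun n : ℕ => Ring.choose (1 - s + (n:ℝ) - 1) n) n)
        fun _ => t := by
    ext k
    simp [mul_comm]
  rw [hf]
  exact h

lemma aux_pow_int (x : ℝ) (hx : 0 < x) :
    ∫⁻ t in Ioo (0:ℝ) 1, ENNReal.ofReal (t ^ (x - 1)) = ENNReal.ofReal (x ^ (-1:ℝ)) := by
  rw [← ofReal_integral_eq_lintegral_ofReal]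
  · rw [← integral_Ioc_eq_integral_Ioo, ← intervalIntegral.integral_of_le zero_le_one,
      integral_rpow (Or.inl (by linarith))]
    congr 1
    simp [Real.rpow_neg_one, Real.zero_rpow hx.ne']
  · have := intervalIntegral.intervalIntegrable_rpow' (a := 0) (b := 1) (r := x - 1) (by linarith)
    rw [intervalIntegrable_iff_integrableOn_Ioo_of_le zero_le_one] at this
    exact this
  · filter_upwards [ae_restrict_mem measurableSet_Ioo] with t ht
    exact Real.rpow_nonneg ht.1.le _

lemma aux_base (s : ℝ) (hs0 : 0 < s) (hs1 : s < 1) (x : ℝ) (hx : 0 < x) :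
    ∑' k : ℕ, ENNReal.ofReal (Ring.choose ((1 - s) + (k:ℝ) - 1) k / Real.Gamma s) *
      ENNReal.ofReal ((x + k) ^ (-1:ℝ)) = ENNReal.ofReal (Real.Gamma x / Real.Gamma (x + s)) := by
  have h1 := ProbabilityTheory.lintegral_betaPDF_eq_one hx hs0
  have hb := ProbabilityTheory.beta_pos hx hs0
  have hG := Real.Gamma_pos_of_pos hs0
  rw [ProbabilityTheory.lintegral_betaPDF] at h1
  have h2 : ∀ t ∈ Ioo (0:ℝ) 1,
      ENNReal.ofReal (1 / ProbabilityTheory.beta x s * t ^ (x - 1) * (1 - t) ^ (s - 1))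
      = ∑' k : ℕ, ENNReal.ofReal (1 / ProbabilityTheory.beta x s *
          Ring.choose ((1 - s) + (k:ℝ) - 1) k) * ENNReal.ofReal (t ^ (x + k - 1)) := by
    intro t ht
    have hs := (aux_series s t ht.1 ht.2).mul_left (1 / ProbabilityTheory.beta x s * t ^ (x - 1))
    have hnn : ∀ k : ℕ, 0 ≤ 1 / ProbabilityTheory.beta x s * t ^ (x - 1) *
        (Ring.choose ((1 - s) + (k:ℝ) - 1) k * t ^ k) := fun k =>
      mul_nonneg (mul_nonneg (by positivity) (Real.rpow_nonneg ht.1.le _))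
        (mul_nonneg (aux_coef_nonneg s hs1 k) (pow_nonneg ht.1.le _))
    rw [← hs.tsum_eq, ENNReal.ofReal_tsum_of_nonneg hnn hs.summable]
    congr 1
    ext k
    rw [← ENNReal.ofReal_mul (mul_nonneg (by positivity) (aux_coef_nonneg s hs1 k))]
    congr 1
    rw [show x + k - 1 = (x - 1) + k by ring, Real.rpow_add ht.1, Real.rpow_natCast]
    ring
  rw [setLIntegral_congr_fun measurableSet_Ioo h2, lintegral_tsum (by intro k; fun_prop)] at h1
  have h3 : ∀ k : ℕ, ∫⁻ t in Ioo (0:ℝ) 1, ENNReal.ofReal (1 / ProbabilityTheory.beta x s *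
          Ring.choose ((1 - s) + (k:ℝ) - 1) k) * ENNReal.ofReal (t ^ (x + k - 1))
      = ENNReal.ofReal (1 / ProbabilityTheory.beta x s *
          Ring.choose ((1 - s) + (k:ℝ) - 1) k) * ENNReal.ofReal ((x + k) ^ (-1:ℝ)) := by
    intro k
    rw [lintegral_const_mul _ (by fun_prop), aux_pow_int _ (by positivity)]
  simp_rw [h3] at h1
  have hx' := Real.Gamma_pos_of_pos hx
  have hxs := Real.Gamma_pos_of_pos (add_pos hx hs0)
  rw [← mul_one (ENNReal.ofReal (Real.Gamma x / Real.Gamma (x + s))), ← h1,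
    ← ENNReal.tsum_mul_left]
  congr 1
  ext k
  rw [← mul_assoc, ← ENNReal.ofReal_mul (div_nonneg hx'.le hxs.le)]
  congr 2
  rw [ProbabilityTheory.beta]
  field_simp

lemma aux_shift (N : ℕ) (y : ℝ) (hy : 0 < y) :
    ENNReal.ofReal ((N:ℝ) + 1) *
      (∫⁻ v in Ioc (0:ℝ) 1, ENNReal.ofReal ((y + v) ^ (-((N:ℝ) + 1 + 1)))) +
      ENNReal.ofReal ((y + 1) ^ (-((N:ℝ) + 1))) = ENNReal.ofReal (y ^ (-((N:ℝ) + 1))) := by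
  have hint : ContinuousOn (fun v : ℝ => (y + v) ^ (-((N:ℝ) + 1 + 1))) (Icc 0 1) := by
    intro v hv
    have : y + v ≠ 0 := by have := hv.1; positivity
    exact (ContinuousAt.rpow_const (by fun_prop) (Or.inl this)).continuousWithinAt
  have hnn : ∀ v ∈ Ioc (0:ℝ) 1, 0 ≤ (y + v) ^ (-((N:ℝ) + 1 + 1)) := fun v hv =>
    Real.rpow_nonneg (by have := hv.1; positivity) _
  rw [← ofReal_integral_eq_lintegral_ofReal
    ((hint.integrableOn_Icc).mono_set Ioc_subset_Icc_self)
    ((ae_restrict_mem measurableSet_Ioc).mono hnn),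
    ← ENNReal.ofReal_mul (by positivity), ← ENNReal.ofReal_add
    (mul_nonneg (by positivity) (setIntegral_nonneg measurableSet_Ioc hnn)) (by positivity)]
  congr 1
  rw [← intervalIntegral.integral_of_le zero_le_one,
    intervalIntegral.integral_comp_add_left (fun u => u ^ (-((N:ℝ) + 1 + 1))) y,
    integral_rpow]
  · have e : -((N:ℝ) + 1 + 1) + 1 = -((N:ℝ) + 1) := by ring
    rw [e, add_zero]
    have : (N:ℝ) + 1 ≠ 0 := by positivity
    field_simp
    ring
  · right
    refine ⟨by have : (0:ℝ) ≤ N := by positivity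
               intro h; linarith, ?_⟩
    rw [uIcc_of_le (by linarith)]
    intro h
    linarith [h.1]

lemma aux_gamma (a x : ℝ) (ha : 0 < a) (hx : 0 < x) :
    Real.Gamma x / Real.Gamma (x + a) - Real.Gamma (x + 1) / Real.Gamma (x + 1 + a)
      = a * (Real.Gamma x / Real.Gamma (x + a + 1)) := by
  rw [Real.Gamma_add_one hx.ne', show x + 1 + a = (x + a) + 1 by ring,
    Real.Gamma_add_one (by positivity)]
  have h1 := Real.Gamma_pos_of_pos hx
  have h2 := Real.Gamma_pos_of_pos (add_pos hx ha)
  field_simp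
  ring

lemma aux_main (N : ℕ) (s : ℝ) (hs0 : 0 < s) (hs1 : s < 1) :
    ∃ μ : Measure ℝ, SFinite μ ∧ μ (Iio 0) = 0 ∧ ∀ x : ℝ, 0 < x →
      ∫⁻ t, ENNReal.ofReal ((x + t) ^ (-((N:ℝ) + 1))) ∂μ =
        ENNReal.ofReal (Real.Gamma x / Real.Gamma (x + N + s)) := by
  induction N with
  | zero =>
    refine ⟨Measure.sum (fun k : ℕ =>
      ENNReal.ofReal (Ring.choose ((1 - s) + (k:ℝ) - 1) k / Real.Gamma s) •
        Measure.dirac (k:ℝ)), inferInstance, ?_, ?_⟩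
    · rw [Measure.sum_apply _ measurableSet_Iio]
      simp
    · intro x hx
      rw [lintegral_sum_measure]
      simp only [lintegral_smul_measure, lintegral_dirac, smul_eq_mul]
      simpa using aux_base s hs0 hs1 x hx
  | succ N ih =>
    obtain ⟨μ, hμ, h0, h⟩ := ih
    have hae : ∀ᵐ t ∂μ, 0 ≤ t := by
      rw [ae_iff]
      simpa [Iio_def] using h0
    have ha : (0:ℝ) < N + s := by positivity
    refine ⟨ENNReal.ofReal (((N:ℝ) + 1) / (N + s)) •
      Measure.conv μ (volume.restrict (Ioc (0:ℝ) 1)), inferInstance, ?_, ?_⟩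
    · have : Measure.conv μ (volume.restrict (Ioc (0:ℝ) 1)) (Iio 0) = 0 := by
        rw [← lintegral_indicator_one measurableSet_Iio, Measure.lintegral_conv
          (measurable_one.indicator measurableSet_Iio)]
        rw [lintegral_congr_ae (g := fun _ => 0), lintegral_zero]
        filter_upwards [hae] with t ht
        rw [setLIntegral_congr_fun (g := fun _ => 0) measurableSet_Ioc, lintegral_zero]
        intro v hv
        have := hv.1
        simp only [indicator_apply, mem_Iio, ite_eq_right_iff]
        intro; linarith
      simp [this]
    · intro x hx
      rw [lintegral_smul_measure, Measure.lintegral_conv (by fun_prop)]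
      have key : ENNReal.ofReal ((N:ℝ) + 1) *
          (∫⁻ t, ∫⁻ v in Ioc (0:ℝ) 1, ENNReal.ofReal ((x + (t + v)) ^ (-((N:ℝ) + 1 + 1))) ∂volume ∂μ)
          + ENNReal.ofReal (Real.Gamma (x + 1) / Real.Gamma (x + 1 + N + s)) =
          ENNReal.ofReal (Real.Gamma x / Real.Gamma (x + N + s)) := by
        rw [← h x hx, ← h (x + 1) (by positivity), ← lintegral_const_mul' _ _ (by simp),
          ← lintegral_add_right _ (by fun_prop)]
        refine lintegral_congr_ae ?_
        filter_upwards [hae] with t ht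
        rw [← aux_shift N (x + t) (by positivity)]
        simp only [add_assoc, add_comm t 1]
      have key2 := ENNReal.eq_sub_of_add_eq (by simp) key
      have hg : 0 ≤ Real.Gamma (x + 1) / Real.Gamma (x + 1 + N + s) :=
        div_nonneg (Real.Gamma_nonneg_of_nonneg (by positivity))
          (Real.Gamma_nonneg_of_nonneg (by positivity))
      rw [← ENNReal.ofReal_sub _ hg, add_assoc x, add_assoc (x + 1), aux_gamma _ _ ha hx] at key2
      rw [smul_eq_mul, div_eq_inv_mul, ENNReal.ofReal_mul (by positivity), mul_assoc]
      push_cast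
      rw [key2, ← ENNReal.ofReal_mul (by positivity), inv_mul_cancel_left₀ ha.ne']
      congr 3
      ring

/-- Theorem: for `N ∈ ℕ` and `0 < s < 1`, the function `x ↦ Γ(x)/Γ(x+N+s)` is a generalized
Stieltjes function of order `N+1`. -/
theorem stmt15 (N : ℕ) (s : ℝ) (hs0 : 0 < s) (hs1 : s < 1) :
    IsGenStieltjes ((N : ℝ) + 1)
      (fun x => Real.Gamma x / Real.Gamma (x + N + s)) := by
  obtain ⟨μ, -, h0, h⟩ := aux_main N s hs0 hs1
  refine ⟨μ, 0, le_rfl, h0, fun x hx => ?_⟩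
  have hae : ∀ᵐ t ∂μ, 0 ≤ t := by
    rw [ae_iff]
    simpa [Iio_def] using h0
  have hnn : 0 ≤ᵐ[μ] fun t => (x + t) ^ (-((N:ℝ) + 1)) := by
    filter_upwards [hae] with t ht
    exact Real.rpow_nonneg (by positivity) _
  have hm : Measurable fun t : ℝ => (x + t) ^ (-((N:ℝ) + 1)) := by fun_prop
  have hi : Integrable (fun t => (x + t) ^ (-((N:ℝ) + 1))) μ := by
    refine ⟨hm.aestronglyMeasurable, ?_⟩
    rw [hasFiniteIntegral_iff_ofReal hnn, h x hx]
    exact ENNReal.ofReal_lt_top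
  refine ⟨hi, ?_⟩
  rw [integral_eq_lintegral_of_nonneg_ae hnn hm.aestronglyMeasurable, h x hx, add_zero,
    ENNReal.toReal_ofReal]
  exact div_nonneg (Real.Gamma_nonneg_of_nonneg hx.le)
    (Real.Gamma_nonneg_of_nonneg (by positivity))
end

section
/- Let {a_n}_{n≥1} be reals with 0 < a_1 ≤ a_2 ≤ … and Σ_{n=1}^∞ 1/a_n² < ∞, let α, β ∈ ℝ, and let f be the entire function f(z) = e^{αz+β} Π_{n=1}^∞ (1 + z/a_n) e^{-z/a_n} (a real entire function of genus 1 with only negative zeros and f(0) > 0). For s > 0, the function h(x) = f'(x)/f(x) - f'(x+s)/f(x+s) = (log f)'(x) - (log f)'(x+s), x > 0, is a generalized Stieltjes function of order 2. -/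
open MeasureTheory Filter Set

lemma stmt17_aux (a : ℕ → ℝ) (ha : 0 < a 0) (hmono : Monotone a)
    (hsum : Summable (fun n : ℕ => 1 / (a n) ^ 2))
    (α β : ℝ) (f : ℝ → ℝ)
    (hf : ∀ x : ℝ, f x = Real.exp (α * x + β) *
      ∏' n : ℕ, ((1 + x / a n) * Real.exp (-x / a n)))
    (x : ℝ) (hx : 0 < x) :
    Summable (fun n => 1 / (x + a n) - 1 / a n) ∧
    deriv f x / f x = α + ∑' n, (1 / (x + a n) - 1 / a n) := by
  have hpos : ∀ n, 0 < a n := fun n => lt_of_lt_of_le ha (hmono (Nat.zero_le n))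
  have hle : ∀ n, a 0 ≤ a n := fun n => hmono (Nat.zero_le n)
  set R := x + a 0 with hR
  set t : Set ℝ := Ioo (-(a 0 / 2)) R with ht
  have hu : Summable (fun n => 2 * R * (1 / (a n) ^ 2)) := hsum.mul_left _
  have hadd : ∀ n, ∀ y ∈ t, a n / 2 < y + a n := by
    intro n y hy
    have := hle n
    have := hy.1
    linarith
  have hfac : ∀ n, ∀ y ∈ t, 0 < 1 + y / a n := by
    intro n y hy
    have h1 := hadd n y hy
    have h2 := hpos n
    have : 1 + y / a n = (y + a n) / a n := by field_simp; ring
    rw [this]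
    apply div_pos _ h2
    linarith
  let g : ℕ → ℝ → ℝ := fun n y => Real.log (1 + y / a n) - y / a n
  have hg : ∀ n y, y ∈ t → HasDerivAt (g n) (1 / (y + a n) - 1 / a n) y := by
    intro n y hy
    have h1 : HasDerivAt (fun y : ℝ => y / a n) (1 / a n) y := (hasDerivAt_id y).div_const _
    have h2 := ((h1.const_add 1).log (hfac n y hy).ne').sub h1
    refine h2.congr_deriv ?_
    have h3 := hfac n y hy
    have h4 := hpos n
    have h5 := hadd n y hy
    have h6 : y + a n ≠ 0 := by linarith
    have : 1 + y / a n = (y + a n) / a n := by field_simp; ring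
    rw [this]
    field_simp
  have hg' : ∀ n y, y ∈ t → ‖1 / (y + a n) - 1 / a n‖ ≤ 2 * R * (1 / (a n) ^ 2) := by
    intro n y hy
    have h4 := hpos n
    have h5 := hadd n y hy
    have h6 : 0 < y + a n := by linarith
    have e : 1 / (y + a n) - 1 / a n = - y / ((y + a n) * a n) := by field_simp; ring
    rw [e, Real.norm_eq_abs, abs_div, abs_neg, abs_of_pos (mul_pos h6 h4)]
    have h7 : |y| ≤ R := abs_le.2 ⟨by have := hy.1; linarith, hy.2.le⟩
    have h8 : a n ^ 2 / 2 ≤ (y + a n) * a n := by nlinarith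
    calc |y| / ((y + a n) * a n) ≤ R / (a n ^ 2 / 2) := by gcongr
      _ = _ := by field_simp
  have hto : IsOpen t := isOpen_Ioo
  have htc : IsPreconnected t := isPreconnected_Ioo
  have h0t : (0 : ℝ) ∈ t := ⟨by linarith, by linarith⟩
  have hxt : x ∈ t := ⟨by linarith, by linarith⟩
  have hg0 : Summable (g · 0) := by simp [g, summable_zero]
  have hS : ∀ y ∈ t, Summable fun n => g n y := fun y hy =>
    summable_of_summable_hasDerivAt_of_isPreconnected hu hto htc hg hg' h0t hg0 hy
  have hD := hasDerivAt_tsum_of_isPreconnected hu hto htc hg hg' h0t hg0 hxt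
  have hfe : ∀ y ∈ t, f y = Real.exp (α * y + β + ∑' n, g n y) := by
    intro y hy
    have hlog : ∀ n, Real.log ((1 + y / a n) * Real.exp (-y / a n)) = g n y := by
      intro n
      rw [Real.log_mul (hfac n y hy).ne' (Real.exp_pos _).ne', Real.log_exp]
      simp only [g]; ring
    rw [hf, Real.exp_add (α * y + β), ← Real.rexp_tsum_eq_tprod]
    · simp_rw [hlog]
    · intro n
      exact mul_pos (hfac n y hy) (Real.exp_pos _)
    · simp_rw [hlog]; exact hS y hy
  have hlin : HasDerivAt (fun y : ℝ => α * y + β) α x := by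
    simpa using ((hasDerivAt_id x).const_mul α).add_const β
  have hder := ((hlin.add hD).exp).congr_of_eventuallyEq
    (f₁ := f) (by filter_upwards [hto.mem_nhds hxt] with y hy using hfe y hy)
  refine ⟨Summable.of_norm_bounded hu (fun n => hg' n x hxt), ?_⟩
  rw [hder.deriv, hfe x hxt]
  exact mul_div_cancel_left₀ _ (Real.exp_pos _).ne'

lemma stmt17_int (b s x : ℝ) (hb : 0 < b) (hs : 0 < s) (hx : 0 < x) :
    Integrable (fun t : ℝ => (x + t) ^ (-(2:ℝ))) (volume.restrict (Ioc b (b + s))) ∧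
    ∫ t in Ioc b (b + s), (x + t) ^ (-(2:ℝ)) = 1 / (x + b) - 1 / (x + s + b) := by
  have hle : b ≤ b + s := by linarith
  have hc : ContinuousOn (fun t : ℝ => (x + t) ^ (-(2:ℝ))) (uIcc b (b + s)) := by
    rw [uIcc_of_le hle]
    refine ContinuousOn.rpow_const (by fun_prop) ?_
    intro t ht
    left
    have := ht.1
    linarith
  refine ⟨(intervalIntegrable_iff_integrableOn_Ioc_of_le hle).1 hc.intervalIntegrable, ?_⟩
  rw [← intervalIntegral.integral_of_le hle,
    intervalIntegral.integral_eq_sub_of_hasDerivAt (f := fun t => - (1 / (x + t))) _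
      hc.intervalIntegrable]
  · have : x + (b + s) = x + s + b := by ring
    rw [this]; ring
  · intro t ht
    rw [uIcc_of_le hle] at ht
    have h1 : 0 < x + t := by have := ht.1; linarith
    have h2 := ((((hasDerivAt_id t).const_add x).inv h1.ne').neg)
    have h3 : (fun t => - (1 / (x + t))) = -(fun t : ℝ => x + id t)⁻¹ := by
      ext t; simp
    rw [h3]
    refine h2.congr_deriv ?_
    rw [Real.rpow_neg h1.le, Real.rpow_two]
    simp only [id]
    field_simp

/-- Corollary: for a real entire function `f` of genus 1 with only negative zeros `-aₙ` and
`f(0) > 0`, and `s > 0`, the function `h(x) = (log f)'(x) - (log f)'(x+s)` is a generalized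
Stieltjes function of order 2 on `(0,∞)`. -/
theorem stmt17 (a : ℕ → ℝ) (ha : 0 < a 0) (hmono : Monotone a)
    (hsum : Summable (fun n : ℕ => 1 / (a n) ^ 2))
    (α β : ℝ) (f : ℝ → ℝ)
    (hf : ∀ x : ℝ, f x = Real.exp (α * x + β) *
      ∏' n : ℕ, ((1 + x / a n) * Real.exp (-x / a n)))
    (s : ℝ) (hs : 0 < s) :
    IsGenStieltjes 2 (fun x => deriv f x / f x - deriv f (x + s) / f (x + s)) := by
  have hpos : ∀ n, 0 < a n := fun n => lt_of_lt_of_le ha (hmono (Nat.zero_le n))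
  refine ⟨Measure.sum (fun n => volume.restrict (Ioc (a n) (a n + s))), 0, le_rfl, ?_, ?_⟩
  · rw [Measure.sum_apply _ measurableSet_Iio, ENNReal.tsum_eq_zero]
    intro n
    rw [Measure.restrict_apply measurableSet_Iio]
    have : Iio 0 ∩ Ioc (a n) (a n + s) = ∅ := by
      ext y
      simp only [mem_inter_iff, mem_Iio, mem_Ioc, mem_empty_iff_false, iff_false]
      rintro ⟨h1, h2, -⟩
      have := hpos n
      linarith
    simp [this]
  · intro x hx
    obtain ⟨s1, e1⟩ := stmt17_aux a ha hmono hsum α β f hf x hx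
    obtain ⟨s2, e2⟩ := stmt17_aux a ha hmono hsum α β f hf (x + s) (by linarith)
    have hsub : Summable (fun n => 1 / (x + a n) - 1 / (x + s + a n)) :=
      (s1.sub s2).congr (fun n => by ring)
    have hint : Integrable (fun t : ℝ => (x + t) ^ (-(2:ℝ)))
        (Measure.sum (fun n => volume.restrict (Ioc (a n) (a n + s)))) := by
      refine integrable_sum_measure (fun n => (stmt17_int (a n) s x (hpos n) hs hx).1) ?_
      refine hsub.congr (fun n => ?_)
      rw [← (stmt17_int (a n) s x (hpos n) hs hx).2]
      refine setIntegral_congr_fun measurableSet_Ioc (fun t ht => ?_)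
      have h1 : 0 < x + t := by have := ht.1; have := hpos n; linarith
      exact (Real.norm_of_nonneg (Real.rpow_nonneg h1.le _)).symm
    refine ⟨hint, ?_⟩
    rw [integral_sum_measure hint]
    simp only [e1, e2, fun n => (stmt17_int (a n) s x (hpos n) hs hx).2]
    rw [add_sub_add_left_eq_sub, ← s1.tsum_sub s2, add_zero]
    exact tsum_congr (fun n => by ring)
end

section
/- For every integer n ≥ 1, the function p_n(t) = (1/t²) Σ_{k=1}^∞ (2πk)^{1-2n} ( 4πk/(t² + (2πk)²) + 8πkt/(t² + (2πk)²)² + ((2n-1)/(2πk)) · 2t/(t² + (2πk)²) ), t > 0, is completely monotonic on (0,∞). (Auxiliary positivity used in the proof: for every c ∈ [0,1] and every t > 0, t - sin t + c(1 - cos t - (t/2) sin t) ≥ 0.) -/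
open MeasureTheory Filter Set

lemma aux_pos (c : ℝ) (h0 : 0 ≤ c) (h1 : c ≤ 1) (t : ℝ) (ht : 0 < t) :
    0 ≤ t - Real.sin t + c * (1 - Real.cos t - (t / 2) * Real.sin t) := by
  have hs : Real.sin t ≤ t := (Real.sin_lt ht).le
  have key : 0 ≤ t - Real.sin t + (1 - Real.cos t - (t / 2) * Real.sin t) := by
    obtain ⟨x, rfl⟩ : ∃ x, t = 2 * x := ⟨t / 2, by ring⟩
    have hx : 0 < x := by linarith
    have hS1 : Real.sin x ≤ x := (Real.sin_lt hx).le
    have hS2 : -x ≤ Real.sin x := by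
      have := Real.abs_sin_le_one x
      have h := Real.abs_sin_lt_abs hx.ne'
      rw [abs_of_pos hx] at h
      exact (abs_lt.mp h).1.le
    rw [Real.sin_two_mul, Real.cos_two_mul]
    have hC1 := Real.cos_le_one x
    have hC2 := Real.neg_one_le_cos x
    have hs1 := Real.sin_le_one x
    have hs2 := Real.neg_one_le_sin x
    have hsq := Real.sin_sq_add_cos_sq x
    generalize Real.sin x = S at *
    generalize Real.cos x = C at *
    have hSC : 0 ≤ 1 - S * C := by nlinarith
    have : 0 ≤ x * (1 - S * C) + S ^ 2 - S * C := by
      rcases le_total 0 S with h | h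
      · nlinarith [mul_nonneg (sub_nonneg.2 hS1) hSC,
          mul_nonneg h (mul_nonneg (sub_nonneg.2 hC1) (by linarith : 0 ≤ 1 + S))]
      · nlinarith [mul_nonneg (by linarith : 0 ≤ x + S) hSC,
          mul_nonneg (neg_nonneg.2 h) (mul_nonneg (by linarith : 0 ≤ 1 + C) (by linarith : 0 ≤ 1 - S))]
    nlinarith
  nlinarith [mul_nonneg h0 key, mul_nonneg (sub_nonneg.2 h1) (sub_nonneg.2 hs)]

/-- density -/
noncomputable def dens (a m : ℝ) (s : ℝ) : ℝ :=
  2 / a * s + (4 + 2 * m) / a ^ 3 - 2 / a ^ 2 * Real.sin (a * s)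
    - (4 + 2 * m) / a ^ 3 * Real.cos (a * s) - 2 / a ^ 2 * (s * Real.sin (a * s))

lemma dens_nonneg {a m s : ℝ} (ha : 2 ≤ a) (hm : 0 ≤ m) (hs : 0 < s) : 0 ≤ dens a m s := by
  have ha0 : 0 < a := by linarith
  have h := aux_pos (2 / a) (by positivity) (by rw [div_le_one ha0]; exact ha) (a * s) (by positivity)
  have h2 : 0 ≤ 1 - Real.cos (a * s) := by linarith [Real.cos_le_one (a * s)]
  have : dens a m s = 2 / a ^ 2 * (a * s - Real.sin (a * s) + 2 / a * (1 - Real.cos (a * s) - a * s / 2 * Real.sin (a * s))) + 2 * m / a ^ 3 * (1 - Real.cos (a * s)) := by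
    unfold dens
    field_simp
    ring
  rw [this]
  positivity

/-- antiderivative -/
noncomputable def anti (a m t s : ℝ) : ℝ :=
  Real.exp (-t * s) * (-(2 / a) * (s / t + 1 / t ^ 2) - (4 + 2 * m) / a ^ 3 / t
    + 2 / a ^ 2 * ((t * Real.sin (a * s) + a * Real.cos (a * s)) / (t ^ 2 + a ^ 2))
    - (4 + 2 * m) / a ^ 3 * ((a * Real.sin (a * s) - t * Real.cos (a * s)) / (t ^ 2 + a ^ 2))
    - 2 / a ^ 2 * (- s * ((t * Real.sin (a * s) + a * Real.cos (a * s)) / (t ^ 2 + a ^ 2))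
      + (-t * (t * Real.sin (a * s) + a * Real.cos (a * s))
        + a * (a * Real.sin (a * s) - t * Real.cos (a * s))) / (t ^ 2 + a ^ 2) ^ 2))

lemma anti_deriv {a t : ℝ} (m s : ℝ) (ha : 0 < a) (ht : 0 < t) :
    HasDerivAt (anti a m t) (Real.exp (-t * s) * dens a m s) s := by
  have hid := hasDerivAt_id' s
  have has : HasDerivAt (fun s => a * s) a s := by simpa using hid.const_mul a
  have hS := has.sin
  have hC := has.cos
  have hE : HasDerivAt (fun s => Real.exp (-t * s)) (Real.exp (-t * s) * (-t)) s := by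
    simpa using (hid.const_mul (-t)).exp
  have hr : t ^ 2 + a ^ 2 ≠ 0 := by positivity
  have hU := ((hS.const_mul t).add (hC.const_mul a)).div_const (t ^ 2 + a ^ 2)
  have hV0 := (hS.const_mul a).sub (hC.const_mul t)
  have hV := hV0.div_const (t ^ 2 + a ^ 2)
  have h := hE.mul ((((((hid.div_const t).add_const (1 / t ^ 2)).const_mul (-(2 / a))).sub_const
    ((4 + 2 * m) / a ^ 3 / t)).add (hU.const_mul (2 / a ^ 2))).sub
      (hV.const_mul ((4 + 2 * m) / a ^ 3)) |>.sub
      (((hid.neg.mul hU).add ((((((hS.const_mul t).add (hC.const_mul a)).const_mul (-t)).add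
        (hV0.const_mul a))).div_const ((t ^ 2 + a ^ 2) ^ 2))).const_mul (2 / a ^ 2)))
  refine h.congr_deriv ?_
  unfold dens
  simp only [Pi.add_apply, Pi.sub_apply, Pi.mul_apply, Pi.neg_apply]
  generalize Real.sin (a * s) = S
  generalize Real.cos (a * s) = C
  generalize Real.exp (-t * s) = E
  field_simp
  ring

lemma anti_tendsto {a t : ℝ} (m : ℝ) (_ha : 0 < a) (ht : 0 < t) :
    Tendsto (anti a m t) atTop (nhds 0) := by
  have h0 : Tendsto (fun s : ℝ => Real.exp (-t * s)) atTop (nhds 0) := by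
    have := tendsto_rpow_mul_exp_neg_mul_atTop_nhds_zero 0 t ht
    simpa using this
  have h1 : Tendsto (fun s : ℝ => Real.exp (-t * s) * s) atTop (nhds 0) := by
    have := tendsto_rpow_mul_exp_neg_mul_atTop_nhds_zero 1 t ht
    simpa [mul_comm] using this
  have bd : ∀ (g f : ℝ → ℝ), (∀ x, |f x| ≤ 1) → Tendsto g atTop (nhds 0) →
      Tendsto (fun s => g s * f s) atTop (nhds 0) := by
    intro g f hf hg
    refine squeeze_zero_norm (fun s => ?_) (by simpa using hg.norm)
    rw [norm_mul]
    exact mul_le_of_le_one_right (norm_nonneg _) (hf s)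
  have hS0 := bd _ (fun s => Real.sin (a * s)) (fun x => Real.abs_sin_le_one _) h0
  have hC0 := bd _ (fun s => Real.cos (a * s)) (fun x => Real.abs_cos_le_one _) h0
  have hS1 := bd _ (fun s => Real.sin (a * s)) (fun x => Real.abs_sin_le_one _) h1
  have hC1 := bd _ (fun s => Real.cos (a * s)) (fun x => Real.abs_cos_le_one _) h1
  have H := (((((h1.const_mul (-(2 / a) / t)).add
    (h0.const_mul (-(2 / a) / t ^ 2 - (4 + 2 * m) / a ^ 3 / t))).add
    (hS0.const_mul (2 / a ^ 2 * t / (t ^ 2 + a ^ 2) - (4 + 2 * m) / a ^ 3 * a / (t ^ 2 + a ^ 2)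
      - 2 / a ^ 2 * (a ^ 2 - t ^ 2) / (t ^ 2 + a ^ 2) ^ 2))).add
    (hC0.const_mul (2 / a ^ 2 * a / (t ^ 2 + a ^ 2) + (4 + 2 * m) / a ^ 3 * t / (t ^ 2 + a ^ 2)
      + 2 / a ^ 2 * (2 * a * t) / (t ^ 2 + a ^ 2) ^ 2))).add
    (hS1.const_mul (2 / a ^ 2 * t / (t ^ 2 + a ^ 2)))).add
    (hC1.const_mul (2 / a ^ 2 * a / (t ^ 2 + a ^ 2)))
  simp only [mul_zero, add_zero] at H
  refine H.congr (fun s => ?_)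
  unfold anti
  ring

/-- k-th lapTerm -/
noncomputable def lapTerm (a m t : ℝ) : ℝ :=
  1 / t ^ 2 * (2 * a / (t ^ 2 + a ^ 2) + 4 * a * t / (t ^ 2 + a ^ 2) ^ 2
    + m / a * (2 * t / (t ^ 2 + a ^ 2)))

lemma anti_zero {a t : ℝ} (m : ℝ) (ha : 0 < a) (ht : 0 < t) : 0 - anti a m t 0 = lapTerm a m t := by
  unfold anti lapTerm
  simp
  field_simp
  ring

lemma lap_integrable {a m t : ℝ} (ha : 2 ≤ a) (hm : 0 ≤ m) (ht : 0 < t) :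
    IntegrableOn (fun s => Real.exp (-t * s) * dens a m s) (Ioi 0) :=
  integrableOn_Ioi_deriv_of_nonneg
    (anti_deriv m 0 (by linarith) ht).continuousAt.continuousWithinAt
    (fun s _ => anti_deriv m s (by linarith) ht)
    (fun s hs => mul_nonneg (Real.exp_pos _).le (dens_nonneg ha hm hs))
    (anti_tendsto m (by linarith) ht)

lemma lap_integral {a m t : ℝ} (ha : 2 ≤ a) (hm : 0 ≤ m) (ht : 0 < t) :
    ∫ s in Ioi 0, Real.exp (-t * s) * dens a m s = lapTerm a m t := by
  rw [← anti_zero m (by linarith) ht]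
  exact integral_Ioi_of_hasDerivAt_of_nonneg
    (anti_deriv m 0 (by linarith) ht).continuousAt.continuousWithinAt
    (fun s _ => anti_deriv m s (by linarith) ht)
    (fun s hs => mul_nonneg (Real.exp_pos _).le (dens_nonneg ha hm hs))
    (anti_tendsto m (by linarith) ht)

lemma cm_of_laplace (f : ℝ → ℝ) (μ : Measure ℝ) (hμ : ∀ᵐ s ∂μ, 0 < s)
    (hint : ∀ t, 0 < t → Integrable (fun s => Real.exp (-t * s)) μ)
    (hf : ∀ t, 0 < t → f t = ∫ s, Real.exp (-t * s) ∂μ) : CompletelyMonotonic f := by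
  set X : ℝ → ℝ := fun s => -s with hX
  have hsub : Ioi (0:ℝ) ⊆ ProbabilityTheory.integrableExpSet X μ := by
    intro t ht
    have := hint t ht
    simpa [ProbabilityTheory.integrableExpSet, hX] using this
  have hmem : ∀ t : ℝ, 0 < t → t ∈ interior (ProbabilityTheory.integrableExpSet X μ) :=
    fun t ht => interior_maximal hsub isOpen_Ioi ht
  have heq : ∀ t : ℝ, 0 < t → f =ᶠ[nhds t] ProbabilityTheory.mgf X μ := by
    intro t ht
    filter_upwards [Ioi_mem_nhds ht] with u hu
    rw [hf u hu]
    simp [ProbabilityTheory.mgf, hX]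
  refine ⟨fun x hx => ?_, fun n x hx => ?_⟩
  · exact ((ProbabilityTheory.analyticAt_mgf (hmem x hx)).contDiffAt).congr_of_eventuallyEq (heq x hx)
  · rw [(heq x hx).iteratedDeriv_eq n, ProbabilityTheory.iteratedDeriv_mgf (hmem x hx),
      ← integral_const_mul]
    refine integral_nonneg_of_ae ?_
    filter_upwards [hμ] with s hs
    have : (-1 : ℝ) ^ n * (X s ^ n * Real.exp (x * X s)) = s ^ n * Real.exp (x * X s) := by
      rw [hX, ← mul_assoc, ← mul_pow]; simp
    simp only [Pi.zero_apply, this]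
    positivity

lemma dens_meas (a m : ℝ) : Measurable (dens a m) := by unfold dens; fun_prop

lemma cm_sum (a w : ℕ → ℝ) (m : ℝ) (ha : ∀ k, 2 ≤ a k) (hm : 0 ≤ m) (hw : ∀ k, 0 ≤ w k)
    (hs : ∀ t, 0 < t → Summable (fun k => w k * lapTerm (a k) m t)) :
    CompletelyMonotonic (fun t => ∑' k, w k * lapTerm (a k) m t) := by
  set d : ℕ → ℝ → ENNReal := fun k s => ENNReal.ofReal (w k * dens (a k) m s) with hd
  have hdm : ∀ k, Measurable (d k) := fun k =>
    ((dens_meas (a k) m).const_mul (w k)).ennreal_ofReal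
  set μ : ℕ → Measure ℝ := fun k => (volume.restrict (Ioi 0)).withDensity (d k) with hμ
  have hpos : ∀ k, ∀ s ∈ Ioi (0:ℝ), 0 ≤ w k * dens (a k) m s := fun k s hs =>
    mul_nonneg (hw k) (dens_nonneg (ha k) hm hs)
  have h1 : ∀ k t, 0 < t → Integrable (fun s => Real.exp (-t * s)) (μ k) := by
    intro k t ht
    rw [hμ]
    refine (integrable_withDensity_iff (hdm k) (by simp [hd])).2 ?_
    refine ((lap_integrable (ha k) hm ht).const_mul (w k)).congr ?_
    filter_upwards [ae_restrict_mem measurableSet_Ioi] with s hs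
    rw [hd]
    simp only
    rw [ENNReal.toReal_ofReal (hpos k s hs)]
    ring
  have h2 : ∀ k t, 0 < t → ∫ s, Real.exp (-t * s) ∂(μ k) = w k * lapTerm (a k) m t := by
    intro k t ht
    rw [hμ]
    simp only
    rw [integral_withDensity_eq_integral_toReal_smul (hdm k) (by simp [hd]),
      ← lap_integral (ha k) hm ht, ← integral_const_mul]
    refine integral_congr_ae ?_
    filter_upwards [ae_restrict_mem measurableSet_Ioi] with s hs
    rw [hd]
    simp only
    rw [ENNReal.toReal_ofReal (hpos k s hs), smul_eq_mul]
    ring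
  have h3 : ∀ t, 0 < t → Integrable (fun s => Real.exp (-t * s)) (Measure.sum μ) := by
    intro t ht
    refine integrable_sum_measure_iff.2 ⟨fun k => h1 k t ht, ?_⟩
    simp only [Real.norm_eq_abs, Real.abs_exp, h2 _ t ht]
    exact hs t ht
  refine cm_of_laplace _ (Measure.sum μ) ?_ h3 ?_
  · rw [Measure.ae_sum_iff]
    intro k
    exact (withDensity_absolutelyContinuous _ _) (ae_restrict_mem measurableSet_Ioi)
  · intro t ht
    rw [integral_sum_measure (h3 t ht)]
    exact tsum_congr fun k => (h2 k t ht).symm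

lemma term_bound {a m t : ℝ} (ha : 1 ≤ a) (hm : 0 ≤ m) (ht : 0 < t) :
    lapTerm a m t ≤ (1 / t ^ 2 * (4 + m)) * (1 / a) := by
  have ha0 : 0 < a := by linarith
  unfold lapTerm
  rw [mul_assoc (1 / t ^ 2) (4 + m) (1 / a)]
  refine mul_le_mul_of_nonneg_left ?_ (by positivity)
  have hr : 2 * a * t ≤ t ^ 2 + a ^ 2 := by nlinarith [sq_nonneg (t - a)]
  have e1 : 2 * a / (t ^ 2 + a ^ 2) ≤ 2 * (1 / a) := by
    rw [mul_one_div, div_le_div_iff₀ (by positivity) ha0]; nlinarith [sq_nonneg t]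
  have e3 : 2 * t / (t ^ 2 + a ^ 2) ≤ 1 / a := by
    rw [div_le_div_iff₀ (by positivity) ha0]; nlinarith
  have e2 : 4 * a * t / (t ^ 2 + a ^ 2) ^ 2 ≤ 2 * (1 / a) := by
    have : 4 * a * t / (t ^ 2 + a ^ 2) ^ 2 = (2 * a / (t ^ 2 + a ^ 2)) * (2 * t / (t ^ 2 + a ^ 2)) := by
      field_simp; ring
    rw [this]
    have h4 : 2 * t / (t ^ 2 + a ^ 2) ≤ 1 := e3.trans (by rw [div_le_one ha0]; exact ha)
    calc _ ≤ 2 * a / (t ^ 2 + a ^ 2) := mul_le_of_le_one_right (by positivity) h4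
      _ ≤ _ := e1
  have e4 : m / a * (2 * t / (t ^ 2 + a ^ 2)) ≤ m * (1 / a) := by
    refine mul_le_mul (div_le_self hm ha) e3 (by positivity) hm
  linarith

open Real in
/-- Theorem: for every `n ≥ 1` the function `pₙ` appearing in the remainder of the asymptotic
expansion of the double Gamma function of Barnes is completely monotonic; together with the
auxiliary positivity `t - sin t + c(1 - cos t - (t/2) sin t) ≥ 0` for `c ∈ [0,1]`, `t > 0`. -/
theorem stmt18 (n : ℕ) (hn : 1 ≤ n) :
    CompletelyMonotonic (fun t =>
      (1 / t ^ 2) * ∑' k : ℕ,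
        (2 * π * ((k : ℝ) + 1)) ^ ((1 : ℤ) - 2 * (n : ℤ)) *
          (4 * π * ((k : ℝ) + 1) / (t ^ 2 + (2 * π * ((k : ℝ) + 1)) ^ 2)
            + 8 * π * ((k : ℝ) + 1) * t / (t ^ 2 + (2 * π * ((k : ℝ) + 1)) ^ 2) ^ 2
            + ((2 * (n : ℝ) - 1) / (2 * π * ((k : ℝ) + 1))) *
                (2 * t / (t ^ 2 + (2 * π * ((k : ℝ) + 1)) ^ 2)))) ∧
    ∀ c : ℝ, 0 ≤ c → c ≤ 1 → ∀ t : ℝ, 0 < t →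
      0 ≤ t - Real.sin t + c * (1 - Real.cos t - (t / 2) * Real.sin t) := by
  refine ⟨?_, fun c h0 h1 t ht => aux_pos c h0 h1 t ht⟩
  have hpi := Real.pi_gt_three
  have hk : ∀ k : ℕ, (k : ℝ) + 1 ≤ 2 * π * ((k : ℝ) + 1) := fun k => by
    have : (0:ℝ) ≤ k := k.cast_nonneg
    nlinarith
  have ha : ∀ k : ℕ, 2 ≤ 2 * π * ((k : ℝ) + 1) := fun k => by
    have : (0:ℝ) ≤ k := k.cast_nonneg
    nlinarith
  have hn' : (1:ℝ) ≤ n := by exact_mod_cast hn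
  have hm : (0:ℝ) ≤ 2 * (n:ℝ) - 1 := by linarith
  have hw : ∀ k : ℕ, 0 ≤ (2 * π * ((k : ℝ) + 1)) ^ ((1 : ℤ) - 2 * (n : ℤ)) := fun k =>
    zpow_nonneg (by linarith [ha k]) _
  have H := cm_sum (fun k : ℕ => 2 * π * ((k : ℝ) + 1))
    (fun k => (2 * π * ((k : ℝ) + 1)) ^ ((1 : ℤ) - 2 * (n : ℤ))) (2 * n - 1) ha hm hw ?_
  · convert H using 1
    funext t
    rw [← tsum_mul_left]
    refine tsum_congr fun k => ?_
    unfold lapTerm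
    ring
  · intro t ht
    have hS : Summable (fun k : ℕ => (1 / t ^ 2 * (4 + (2 * (n:ℝ) - 1))) * (1 / ((k : ℝ) + 1) ^ 2)) := by
      refine Summable.mul_left _ ?_
      have := (summable_nat_add_iff 1).2 (Real.summable_one_div_nat_pow.2 one_lt_two)
      simpa using this
    refine Summable.of_nonneg_of_le (fun k => ?_) (fun k => ?_) hS
    · have := ha k
      refine mul_nonneg (hw k) ?_
      unfold lapTerm
      have hp : 0 < 2 * π * ((k : ℝ) + 1) := by linarith
      generalize 2 * π * ((k : ℝ) + 1) = b at *
      positivity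
    · have h2 := ha k
      have h3 := hk k
      have hk0 : (0:ℝ) < (k:ℝ) + 1 := by positivity
      have hb := term_bound (a := 2 * π * ((k : ℝ) + 1)) (by linarith) hm ht
      have hinv : 1 / (2 * π * ((k : ℝ) + 1)) ≤ 1 / ((k : ℝ) + 1) := one_div_le_one_div_of_le hk0 h3
      have hwb : (2 * π * ((k : ℝ) + 1)) ^ ((1 : ℤ) - 2 * (n : ℤ)) ≤ 1 / (2 * π * ((k : ℝ) + 1)) := by
        rw [one_div, ← zpow_neg_one]
        exact zpow_le_zpow_right₀ (by linarith) (by omega)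
      have hC : 0 ≤ 1 / t ^ 2 * (4 + (2 * (n:ℝ) - 1)) := by positivity
      calc _ ≤ (1 / ((k : ℝ) + 1)) * ((1 / t ^ 2 * (4 + (2 * (n:ℝ) - 1))) * (1 / ((k : ℝ) + 1))) :=
            mul_le_mul_of_nonneg (hwb.trans hinv)
              (hb.trans (mul_le_mul_of_nonneg_left hinv hC)) (hw k) (by positivity)
        _ = _ := by field_simp
end
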